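/- arXiv:math/0609644 — 4 statements merged into one kernel-verified Lean document; each statement's English description precedes it below -/
import Mathlib

section
/- Let σ = (312) or σ = (321), and let Y be a Young diagram of size n given by b such that, for some k ≥ 1, b(t) = k + 2 for all 1 ≤ t ≤ k and b(k+1) > k + 2 (the bottom critical point of Y is 2-critical with exactly k rows below it). Let Y'' be the Young diagram of size n − k given by b''(t) = b(k + t) − k. Then |S_Y(σ)| = c_{k+1}·|S_{↘Y''}(σ)| + (c_{k+2} − c_{k+1})·|S_{↗Y''}(σ)|, and |S_{↘Y}(σ)| = c_k·|S_{↘Y''}(σ)| + (c_{k+1} − c_k)·|S_{↗Y''}(σ)|. -/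
/-!
Write a transversal `π` of `Y` as a pair of patterns: `ρ`, formed by the entries in the first
`k + 2` columns, and `υ`, formed by the entries in the rows from height `k` on. The `k` lowest rows
end at column `k + 2`, so their entries all lie in the first `k + 2` columns, and the two remaining
entries of these columns are the two largest of `ρ` and the two leftmost of `υ`. Hence `(ρ, υ)`
determines `π`, and the pairs that arise are those for which the two largest values of `ρ` are in
the order of the two leftmost entries of `υ`. An occurrence of a pattern in `Y` that uses a column
beyond `k + 2` uses no row below height `k`, so `π` avoids `σ` in `Y` if and only if `ρ` avoids `σ`
and `υ` avoids `σ` in `Y''`.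

It remains to count the `ρ` according to the order of their two largest values and of their two
leftmost entries. A permutation avoids `312` or `321` if and only if, after each entry, the smaller
entries are decreasing, respectively increasing. Removing the first entry leads to the ballot
recursion, and removing the second entry of an avoider that starts with a descent shortens it by one
without loss of information.
-/

open Equiv

/-- `π` is a transversal of the Young diagram with row lengths `b` (zero-indexed:
the row at height `h` has `b h` cells, i.e. column `i` (1-indexed `i+1`) lies in that row
iff `(i:ℕ)+1 ≤ b h`). -/
def IsTransversal {n : ℕ} (b : Fin n → ℕ) (π : Equiv.Perm (Fin n)) : Prop :=
  ∀ i : Fin n, (i : ℕ) + 1 ≤ b (π i)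

/-- The transversal `π` contains the pattern `τ` inside the Young diagram `b`:
there are columns `f 0 < f 1 < …` whose dots are in the relative order prescribed by `τ`
and all rows and columns through these dots intersect inside the diagram. -/
def ContainsIn {n k : ℕ} (b : Fin n → ℕ) (π : Equiv.Perm (Fin n))
    (τ : Equiv.Perm (Fin k)) : Prop :=
  ∃ f : Fin k → Fin n, StrictMono f ∧
    (∀ s t : Fin k, τ s < τ t ↔ π (f s) < π (f t)) ∧
    (∀ s t : Fin k, (f s : ℕ) + 1 ≤ b (π (f t)))

/-- `|S_Y(τ)|`: the number of transversals of the Young diagram `b` avoiding `τ` in `Y`. -/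
noncomputable def SYcard {n k : ℕ} (b : Fin n → ℕ) (τ : Equiv.Perm (Fin k)) : ℕ :=
  Nat.card {π : Equiv.Perm (Fin n) // IsTransversal b π ∧ ¬ ContainsIn b π τ}

/-- Classical pattern containment for permutations. -/
def ContainsPat {n k : ℕ} (π : Equiv.Perm (Fin n)) (τ : Equiv.Perm (Fin k)) : Prop :=
  ∃ f : Fin k → Fin n, StrictMono f ∧ ∀ s t : Fin k, τ s < τ t ↔ π (f s) < π (f t)

/-- `|S_n(τ)|`: the number of permutations of length `n` avoiding `τ`. -/
noncomputable def SnCard (n : ℕ) {k : ℕ} (τ : Equiv.Perm (Fin k)) : ℕ :=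
  Nat.card {π : Equiv.Perm (Fin n) // ¬ ContainsPat π τ}

def p123 : Equiv.Perm (Fin 3) := Equiv.refl _
def p213 : Equiv.Perm (Fin 3) :=
  ⟨![1, 0, 2], ![1, 0, 2], by intro x; fin_cases x <;> rfl, by intro x; fin_cases x <;> rfl⟩
def p312 : Equiv.Perm (Fin 3) :=
  ⟨![2, 0, 1], ![1, 2, 0], by intro x; fin_cases x <;> rfl, by intro x; fin_cases x <;> rfl⟩
def p321 : Equiv.Perm (Fin 3) :=
  ⟨![2, 1, 0], ![2, 1, 0], by intro x; fin_cases x <;> rfl, by intro x; fin_cases x <;> rfl⟩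

/-- `(σ|τ)`: the block sum with the block of `σ` before and entirely above the block of `τ`. -/
def blockSum {m k : ℕ} (σ : Equiv.Perm (Fin m)) (τ : Equiv.Perm (Fin k)) :
    Equiv.Perm (Fin (m + k)) :=
  finSumFinEquiv.symm.trans ((((Equiv.sumCongr σ τ).trans
    (Equiv.sumComm (Fin m) (Fin k))).trans finSumFinEquiv).trans
    (finCongr (Nat.add_comm k m)))

/-- `|S_{↘Y}(τ)|`: avoiders whose two leftmost entries are decreasing. -/
noncomputable def SYcardLeftDesc {m k : ℕ} (b : Fin m → ℕ) (τ : Equiv.Perm (Fin k)) : ℕ :=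
  Nat.card {π : Equiv.Perm (Fin m) // IsTransversal b π ∧ ¬ ContainsIn b π τ ∧
    ∀ i j : Fin m, (i : ℕ) = 0 → (j : ℕ) = 1 → π j < π i}

/-- `|S_{↗Y}(τ)|`: avoiders whose two leftmost entries are increasing. -/
noncomputable def SYcardLeftAsc {m k : ℕ} (b : Fin m → ℕ) (τ : Equiv.Perm (Fin k)) : ℕ :=
  Nat.card {π : Equiv.Perm (Fin m) // IsTransversal b π ∧ ¬ ContainsIn b π τ ∧
    ∀ i j : Fin m, (i : ℕ) = 0 → (j : ℕ) = 1 → π i < π j}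

/-- `|S^{↘}_Y(τ)|`: avoiders in which the value `m` occurs to the left of the value `m-1`. -/
noncomputable def SYcardTopDesc {m k : ℕ} (b : Fin m → ℕ) (τ : Equiv.Perm (Fin k)) : ℕ :=
  Nat.card {π : Equiv.Perm (Fin m) // IsTransversal b π ∧ ¬ ContainsIn b π τ ∧
    ∀ u v : Fin m, (u : ℕ) + 1 = m → (v : ℕ) + 2 = m → π⁻¹ u < π⁻¹ v}

/-- `|S^{↗}_Y(τ)|`: avoiders in which the value `m-1` occurs to the left of the value `m`. -/
noncomputable def SYcardTopAsc {m k : ℕ} (b : Fin m → ℕ) (τ : Equiv.Perm (Fin k)) : ℕ :=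
  Nat.card {π : Equiv.Perm (Fin m) // IsTransversal b π ∧ ¬ ContainsIn b π τ ∧
    ∀ u v : Fin m, (u : ℕ) + 1 = m → (v : ℕ) + 2 = m → π⁻¹ v < π⁻¹ u}

/-! ### Inserting an entry into a permutation -/

/-- The decomposition of a permutation of length `n + 1` into its entry at position `i` and the
standardization of the remaining entries, read backwards: `insertEntry i (j, e)` has the value `j`
at position `i`. -/
def insertEntry {n : ℕ} (i : Fin (n + 1)) :
    Fin (n + 1) × Perm (Fin n) ≃ Perm (Fin (n + 1)) where
  toFun p := (finSuccEquiv' i).trans ((optionCongr p.2).trans (finSuccEquiv' p.1).symm)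
  invFun π := (π i, removeNone ((finSuccEquiv' i).symm.trans (π.trans (finSuccEquiv' (π i)))))
  left_inv p := by
    have hp : (finSuccEquiv' i).symm.trans ((finSuccEquiv' i).trans (optionCongr p.2)) =
        optionCongr p.2 := by rw [← Equiv.trans_assoc, Equiv.symm_trans_self, Equiv.refl_trans]
    simp [Equiv.trans_assoc, hp]
  right_inv π := by
    ext x : 1
    rcases Fin.eq_self_or_eq_succAbove i x with rfl | ⟨x, rfl⟩
    · simp
    · simp

section insertEntry

variable {n : ℕ} (i j : Fin (n + 1)) (e : Perm (Fin n))

theorem insertEntry_self : insertEntry i (j, e) i = j := by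
  simp [insertEntry]

theorem insertEntry_succAbove (x : Fin n) :
    insertEntry i (j, e) (i.succAbove x) = j.succAbove (e x) := by
  simp [insertEntry]

theorem insertEntry_zero_succ (x : Fin n) :
    insertEntry 0 (j, e) x.succ = j.succAbove (e x) := by
  rw [← Fin.succAbove_zero, insertEntry_succAbove]

end insertEntry

section insertEntryOne

variable {m : ℕ} (j : Fin (m + 2)) (e : Perm (Fin (m + 1)))

theorem insertEntry_one_zero : insertEntry 1 (j, e) 0 = j.succAbove (e 0) := by
  rw [← insertEntry_succAbove 1 j e 0, Fin.one_succAbove_zero]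

theorem insertEntry_one_succ_succ (x : Fin m) :
    insertEntry 1 (j, e) x.succ.succ = j.succAbove (e x.succ) := by
  rw [← insertEntry_succAbove 1 j e x.succ, Fin.one_succAbove_succ]

end insertEntryOne

theorem succAbove_lt_iff_val_lt {n : ℕ} {j : Fin (n + 1)} {x : Fin n} :
    j.succAbove x < j ↔ (x : ℕ) < j :=
  Fin.succAbove_lt_iff_castSucc_lt j x

theorem lt_succAbove_iff_le_val {n : ℕ} {j : Fin (n + 1)} {x : Fin n} :
    j < j.succAbove x ↔ (j : ℕ) ≤ x :=
  Fin.lt_succAbove_iff_le_castSucc j x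

theorem val_succAbove_le_iff_val_lt {n L : ℕ} {j : Fin (n + 1)} (hj : (j : ℕ) ≤ L) {x : Fin n} :
    (j.succAbove x : ℕ) ≤ L ↔ (x : ℕ) < L := by
  rcases Fin.castSucc_lt_or_lt_succ j x with h | h
  · rw [Fin.succAbove_of_castSucc_lt j x h]
    have : (x : ℕ) < j := h
    simp only [Fin.val_castSucc]
    omega
  · rw [Fin.succAbove_of_lt_succ j x h, Fin.val_succ, Nat.succ_le_iff]

theorem forall_val_lt_iff {n L : ℕ} (hL : L ≤ n) (e : Perm (Fin n)) {P : ℕ → Prop} :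
    (∀ v < L, P v) ↔ ∀ x, (e x : ℕ) < L → P (e x) := by
  rw [e.forall_congr_right (q := fun y : Fin n => (y : ℕ) < L → P y), Fin.forall_iff]
  exact ⟨fun h v _ => h v, fun h v hv => h v (hv.trans_le hL) hv⟩

theorem forall_lt_le_iff_iff {inc : Prop} [Decidable inc] {L j : ℕ} (hj : j ≤ L) :
    (∀ v < L, (j ≤ v ↔ inc)) ↔ j = if inc then 0 else L := by
  constructor
  · intro h
    by_contra hne
    split_ifs at hne with hinc
    · exact absurd ((h 0 (by omega)).2 hinc) (by omega)
    · exact hinc ((h j (by omega)).1 le_rfl)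
  · intro h v hv
    split_ifs at h with hinc <;> simp only [hinc, iff_true, iff_false] <;> omega

/-! ### Avoiders of length `n` are counted by the Catalan numbers -/

/-- Avoidance of `312` (for `inc = False`) or `321` (for `inc = True`): after each entry, the
smaller entries form a monotone sequence, which is increasing if and only if `inc`. -/
def AvoidsMaxFirst (inc : Prop) {n : ℕ} (π : Perm (Fin n)) : Prop :=
  ∀ x y z : Fin n, x < y → y < z → π y < π x → π z < π x → (π y < π z ↔ inc)

/-- The values of `π` below `L` appear in increasing order (for `inc = True`) or in decreasing order
(for `inc = False`). -/
def MonoBelow (inc : Prop) (L : ℕ) {n : ℕ} (π : Perm (Fin n)) : Prop :=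
  ∀ y z : Fin n, y < z → (π y : ℕ) < L → (π z : ℕ) < L → (π y < π z ↔ inc)

theorem not_containsPat_iff {σ : Perm (Fin 3)} (hσ : σ = p312 ∨ σ = p321) {n : ℕ}
    (π : Perm (Fin n)) : ¬ ContainsPat π σ ↔ AvoidsMaxFirst (σ 2 < σ 1) π := by
  have h10 : σ 1 < σ 0 := by rcases hσ with rfl | rfl <;> decide
  have h20 : σ 2 < σ 0 := by rcases hσ with rfl | rfl <;> decide
  have h21 : σ 1 ≠ σ 2 := σ.injective.ne (by decide)
  rw [not_iff_comm, AvoidsMaxFirst]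
  push Not
  constructor
  · rintro ⟨x, y, z, hxy, hyz, hyx, hzx, hne⟩
    refine ⟨![x, y, z], ?_, ?_⟩
    · simp [Fin.strictMono_iff_lt_succ, Fin.forall_fin_succ, hxy, hyz]
    · have hne' := π.injective.ne hyz.ne
      simp only [Fin.forall_fin_succ, Matrix.cons_val_zero, Matrix.cons_val_succ,
        Fin.succ_zero_eq_one, Matrix.cons_val_fin_one, Fin.succ_one_eq_two, IsEmpty.forall_iff,
        and_true, lt_self_iff_false, true_and, iff_false, not_lt]
      grind
  · rintro ⟨f, hf, hord⟩
    refine ⟨f 0, f 1, f 2, hf (by decide), hf (by decide), (hord _ _).1 h10, (hord _ _).1 h20, ?_⟩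
    have := hord 1 2
    grind

section

variable {inc : Prop} {n L : ℕ} {j : Fin (n + 1)} {e : Perm (Fin n)}

theorem avoidsMaxFirst_insertEntry_zero :
    AvoidsMaxFirst inc (insertEntry 0 (j, e)) ↔ AvoidsMaxFirst inc e ∧ MonoBelow inc j e := by
  simp [AvoidsMaxFirst, MonoBelow, Fin.forall_fin_succ, insertEntry_self, insertEntry_zero_succ,
    Fin.succAbove_lt_succAbove_iff, succAbove_lt_iff_val_lt, and_comm]

theorem MonoBelow.insertEntry_zero (hL : L ≤ j) (he : MonoBelow inc j e) :
    MonoBelow inc L (insertEntry 0 (j, e)) := by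
  have hlt {x} (hx : (j.succAbove x : ℕ) < L) : (x : ℕ) < j :=
    succAbove_lt_iff_val_lt.1 (hx.trans_le hL)
  simp only [MonoBelow, Fin.forall_fin_succ, insertEntry_self, insertEntry_zero_succ,
    Fin.succAbove_lt_succAbove_iff, Fin.succ_lt_succ_iff, Fin.not_lt_zero, IsEmpty.forall_iff,
    hL.not_gt, true_and, implies_true]
  exact fun y z hyz hy hz => he y z hyz (hlt hy) (hlt hz)

theorem monoBelow_succ_insertEntry_zero [Decidable inc] (hj : (j : ℕ) ≤ L) (hL : L ≤ n) :
    MonoBelow inc (L + 1) (insertEntry 0 (j, e)) ↔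
      (j : ℕ) = (if inc then 0 else L) ∧ MonoBelow inc L e := by
  rw [← forall_lt_le_iff_iff hj, forall_val_lt_iff hL e]
  simp [MonoBelow, Fin.forall_fin_succ, insertEntry_self, insertEntry_zero_succ,
    Fin.succAbove_lt_succAbove_iff, lt_succAbove_iff_le_val, val_succAbove_le_iff_val_lt hj, hj]

end

theorem avoidsMaxFirst_insertEntry_one {inc : Prop} {m : ℕ} {j : Fin (m + 2)}
    {e : Perm (Fin (m + 1))} (hj : (j : ℕ) ≤ e 0) :
    AvoidsMaxFirst inc (insertEntry 1 (j, e)) ↔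
      AvoidsMaxFirst inc e ∧ ∀ v < (e 0 : ℕ), (j ≤ v ↔ inc) := by
  have hlt {x} (hx : (e x : ℕ) < j) : e x < e 0 := hx.trans_le hj
  rw [forall_val_lt_iff (e 0).isLt.le e]
  simp only [AvoidsMaxFirst, Fin.forall_fin_succ, not_lt_zero, insertEntry_one_zero,
    IsEmpty.forall_iff, implies_true, Fin.succ_zero_eq_one, Fin.lt_one_iff, insertEntry_self,
    insertEntry_one_succ_succ, true_and, succAbove_lt_iff_val_lt, forall_const, Fin.succ_pos,
    Fin.succAbove_lt_succAbove_iff, and_self, Fin.succ_ne_zero, Fin.succ_lt_succ_iff,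
    lt_succAbove_iff_le_val, hj, Fin.val_fin_lt, lt_self_iff_false, true_iff]
  exact ⟨fun h => ⟨⟨h.1.2, h.2.2⟩, h.1.1⟩,
    fun h => ⟨⟨h.2, h.1.1⟩, fun y z hyz hy hz => h.1.1 y z hyz (hlt hy) (hlt hz), h.1.2⟩⟩

theorem card_subtype_and_add_card_subtype_and_not {α : Type*} [Finite α] (P Q : α → Prop) :
    Nat.card {x // P x ∧ Q x} + Nat.card {x // P x ∧ ¬ Q x} = Nat.card {x // P x} :=
  Set.ncard_inter_add_ncard_sdiff_eq_ncard {x | P x} {x | Q x}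

theorem card_subtype_fst_eq_and {α β : Type*} (f : α → β) (Q : α → Prop) :
    Nat.card {p : β × α // p.1 = f p.2 ∧ Q p.2} = Nat.card {a // Q a} :=
  Nat.card_congr
    { toFun p := ⟨p.1.2, p.2.2⟩
      invFun a := ⟨(f a, a), rfl, a.2⟩
      left_inv p := Subtype.ext (Prod.ext p.2.1.symm rfl)
      right_inv _ := rfl }

theorem card_subtype_perm_eq_sum {n : ℕ} (i : Fin (n + 1)) (P : Perm (Fin (n + 1)) → Prop) :
    Nat.card {π // P π} = ∑ j, Nat.card {e // P (insertEntry i (j, e))} := by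
  rw [← Nat.card_sigma]
  exact Nat.card_congr (((insertEntry i).subtypeEquivOfSubtype (p := P)).symm.trans
    (subtypeProdEquivSigmaSubtype fun j e => P (insertEntry i (j, e))))

/-- The number of `AvoidsMaxFirst inc` permutations of length `n` satisfying `MonoBelow inc L`. -/
noncomputable def monoBelowCard (inc : Prop) (n L : ℕ) : ℕ :=
  Nat.card {π : Perm (Fin n) // AvoidsMaxFirst inc π ∧ MonoBelow inc L π}

section

variable {inc : Prop} {n L : ℕ}

theorem monoBelow_of_le_one (hL : L ≤ 1) (π : Perm (Fin n)) : MonoBelow inc L π :=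
  fun y z hyz hy hz => absurd (π.injective (Fin.ext (by omega))) hyz.ne

theorem MonoBelow.mono {L' : ℕ} (h : L ≤ L') {e : Perm (Fin n)}
    (he : MonoBelow inc L' e) : MonoBelow inc L e :=
  fun y z hyz hy hz => he y z hyz (hy.trans_le h) (hz.trans_le h)

theorem monoBelowCard_of_le_one (hL : L ≤ 1) :
    monoBelowCard inc n L = Nat.card {π : Perm (Fin n) // AvoidsMaxFirst inc π} := by
  simp only [monoBelowCard, monoBelow_of_le_one hL, and_true]

theorem card_insertEntry_zero_of_le {j : Fin (n + 1)} (hj : L ≤ j) :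
    Nat.card {e // AvoidsMaxFirst inc (insertEntry 0 (j, e)) ∧
      MonoBelow inc L (insertEntry 0 (j, e))} = monoBelowCard inc n j := by
  refine Nat.card_congr (Equiv.subtypeEquivRight fun e => ?_)
  rw [avoidsMaxFirst_insertEntry_zero, and_iff_left_of_imp fun h => h.2.insertEntry_zero hj]

theorem card_insertEntry_zero_of_ge [Decidable inc] {j : Fin (n + 1)} (hj : (j : ℕ) ≤ L)
    (hL : L ≤ n) :
    Nat.card {e // AvoidsMaxFirst inc (insertEntry 0 (j, e)) ∧
      MonoBelow inc (L + 1) (insertEntry 0 (j, e))} =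
      if (j : ℕ) = (if inc then 0 else L) then monoBelowCard inc n L else 0 := by
  have h e : (AvoidsMaxFirst inc (insertEntry 0 (j, e)) ∧
      MonoBelow inc (L + 1) (insertEntry 0 (j, e))) ↔
      (j : ℕ) = (if inc then 0 else L) ∧ AvoidsMaxFirst inc e ∧ MonoBelow inc L e := by
    rw [avoidsMaxFirst_insertEntry_zero, monoBelow_succ_insertEntry_zero hj hL]
    exact ⟨fun h => ⟨h.2.1, h.1.1, h.2.2⟩, fun h => ⟨⟨h.2.1, h.2.2.mono hj⟩, h.1, h.2.2⟩⟩
  simp only [h]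
  by_cases hj₀ : (j : ℕ) = if inc then 0 else L
  · simp only [hj₀, true_and, if_true, monoBelowCard]
  · simp only [hj₀, false_and, if_false, Nat.card_of_isEmpty]

theorem monoBelowCard_succ_succ (hL : L ≤ n) :
    monoBelowCard inc (n + 1) (L + 1) =
      monoBelowCard inc n L + ∑ j ∈ Finset.Ico (L + 1) (n + 1), monoBelowCard inc n j := by
  classical
  set j₀ := if inc then 0 else L with hj₀
  have hj₀L : j₀ ∈ Finset.Ico 0 (L + 1) := by
    rw [Finset.mem_Ico, hj₀]
    split_ifs <;> omega
  calc monoBelowCard inc (n + 1) (L + 1)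
    _ = ∑ j : Fin (n + 1), if (j : ℕ) ≤ L then (if (j : ℕ) = j₀ then monoBelowCard inc n L else 0)
          else monoBelowCard inc n j := by
      rw [monoBelowCard, card_subtype_perm_eq_sum 0]
      refine Finset.sum_congr rfl fun j _ => ?_
      split_ifs with hj hjj₀
      · rw [card_insertEntry_zero_of_ge hj hL, if_pos hjj₀]
      · rw [card_insertEntry_zero_of_ge hj hL, if_neg hjj₀]
      · exact card_insertEntry_zero_of_le (by omega)
    _ = ∑ j ∈ Finset.Ico 0 (L + 1), (if j = j₀ then monoBelowCard inc n L else 0) +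
          ∑ j ∈ Finset.Ico (L + 1) (n + 1), monoBelowCard inc n j := by
      rw [Fin.sum_univ_eq_sum_range (fun j => if j ≤ L then
        (if j = j₀ then monoBelowCard inc n L else 0) else monoBelowCard inc n j),
        Finset.range_eq_Ico, ← Finset.sum_Ico_consecutive _ (Nat.zero_le (L + 1)) (by omega)]
      congr 1 <;> refine Finset.sum_congr rfl fun j hj => ?_ <;> rw [Finset.mem_Ico] at hj
      · rw [if_pos (by omega)]
      · rw [if_neg (by omega)]
    _ = _ := by rw [Finset.sum_ite_eq', if_pos hj₀L]

end

theorem sum_Ico_add_choose_eq_choose {f : ℕ → ℕ} {n : ℕ}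
    (hf : ∀ L c, L + c = 2 * n → L ≤ n → f L + c.choose (n + 1) = c.choose n) {L c : ℕ}
    (hLc : L + c = 2 * n + 1) (hL : L ≤ n + 1) :
    ∑ j ∈ Finset.Ico L (n + 1), f j + c.choose (n + 1 + 1) = c.choose (n + 1) := by
  induction hL using Nat.decreasingInduction generalizing c with
  | self => simp [show c = n by omega, Nat.choose_eq_zero_of_lt]
  | of_succ L hL ih =>
    obtain ⟨c, rfl⟩ : ∃ d, c = d + 1 := ⟨c - 1, by omega⟩
    have hfL := hf L c (by omega) (by omega)
    have hsum := ih (c := c) (by omega)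
    rw [Finset.sum_eq_sum_Ico_succ_bot hL, Nat.choose_succ_succ' c (n + 1),
      Nat.choose_succ_succ' c n]
    omega

theorem monoBelowCard_add_choose_eq_choose (inc : Prop) {n L c : ℕ} (hLc : L + c = 2 * n)
    (hL : L ≤ n) :
    monoBelowCard inc n L + c.choose (n + 1) = c.choose n := by
  induction n generalizing L c with
  | zero =>
    obtain ⟨rfl, rfl⟩ : L = 0 ∧ c = 0 := by omega
    have : monoBelowCard inc 0 0 = 1 := by
      simp [monoBelowCard, AvoidsMaxFirst, MonoBelow]
    simp [this]
  | succ n ih =>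
    have hpos {L c : ℕ} (hLc : L + c = 2 * n + 1) (hL : L ≤ n) :
        monoBelowCard inc (n + 1) (L + 1) + c.choose (n + 1 + 1) = c.choose (n + 1) := by
      obtain ⟨c, rfl⟩ : ∃ d, c = d + 1 := ⟨c - 1, by omega⟩
      have hsum := sum_Ico_add_choose_eq_choose (@ih) (L := L + 1) (c := c) (by omega) (by omega)
      have hL' := ih (L := L) (c := c) (by omega) hL
      rw [monoBelowCard_succ_succ hL, Nat.choose_succ_succ' c (n + 1),
        Nat.choose_succ_succ' c n]
      omega
    cases L with
    | succ L => exact hpos (by omega) (by omega)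
    | zero =>
      obtain rfl : c = 2 * n + 1 + 1 := by omega
      have h1 : monoBelowCard inc (n + 1) 1 + _ = _ := hpos (zero_add _) (Nat.zero_le n)
      have hsymm := Nat.choose_symm_half n
      rw [monoBelowCard_of_le_one zero_le_one, ← monoBelowCard_of_le_one le_rfl,
        Nat.choose_succ_succ' (2 * n + 1) (n + 1), Nat.choose_succ_succ' (2 * n + 1) n]
      omega

theorem card_avoidsMaxFirst (inc : Prop) (n : ℕ) :
    Nat.card {π : Perm (Fin n) // AvoidsMaxFirst inc π} = catalan n := by
  have hballot := monoBelowCard_add_choose_eq_choose inc (zero_add (2 * n)) (Nat.zero_le n)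
  rw [monoBelowCard_of_le_one zero_le_one] at hballot
  have hchoose := Nat.choose_succ_right_eq (2 * n) n
  have hcatalan := succ_mul_catalan_eq_centralBinom n
  rw [Nat.centralBinom] at hcatalan
  rw [show 2 * n - n = n by omega] at hchoose
  refine Nat.eq_of_mul_eq_mul_left (Nat.succ_pos n) ?_
  have hmul := congrArg ((n + 1) * ·) hballot
  simp only [mul_add] at hmul
  linarith

/-! ### Descents among the leftmost entries and among the largest values -/

/-- The two leftmost entries of `π` are decreasing; vacuous in length less than two. -/
def LeftDesc {n : ℕ} (π : Perm (Fin n)) : Prop :=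
  ∀ i j : Fin n, (i : ℕ) = 0 → (j : ℕ) = 1 → π j < π i

/-- The largest value of `π` occurs to the left of the second largest one; vacuous in length less
than two. -/
def TopDesc {n : ℕ} (π : Perm (Fin n)) : Prop :=
  ∀ u v : Fin n, (u : ℕ) + 1 = n → (v : ℕ) + 2 = n → π⁻¹ u < π⁻¹ v

theorem leftDesc_iff {m : ℕ} {π : Perm (Fin (m + 2))} : LeftDesc π ↔ π 1 < π 0 := by
  refine ⟨fun h => h 0 1 rfl rfl, fun h i j hi hj => ?_⟩
  rwa [show i = 0 from Fin.ext hi, show j = 1 from Fin.ext hj]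

theorem topDesc_iff {n : ℕ} {π : Perm (Fin n)} :
    TopDesc π ↔ ∀ x y, (π x : ℕ) + 1 = n → (π y : ℕ) + 2 = n → x < y := by
  constructor
  · intro h x y hx hy
    simpa using h (π x) (π y) hx hy
  · intro h u v hu hv
    exact h _ _ (by simpa using hu) (by simpa using hv)

theorem topDesc_of_apply_zero {n : ℕ} {π : Perm (Fin (n + 1))} (h : π 0 = Fin.last n) :
    TopDesc π := by
  refine topDesc_iff.2 fun x y hx hy => ?_
  obtain rfl : x = 0 := π.injective (by rw [h]; exact Fin.ext (by simpa using hx))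
  refine Fin.pos_of_ne_zero ?_
  rintro rfl
  omega

section reverseComplementInverse

variable {n : ℕ} {π : Perm (Fin n)}

/-- The reverse-complement of the inverse of a permutation. It preserves avoidance of `312` and
of `321`, and exchanges descents on the left with descents on top. -/
def reverseComplementInverse (π : Perm (Fin n)) : Perm (Fin n) := Fin.revPerm * π⁻¹ * Fin.revPerm

theorem reverseComplementInverse_apply (x : Fin n) :
    reverseComplementInverse π x = (π⁻¹ x.rev).rev :=
  rfl

theorem reverseComplementInverse_involutive :
    Function.Involutive (reverseComplementInverse (n := n)) := by
  have hrev : (Fin.revPerm : Perm (Fin n))⁻¹ = Fin.revPerm := Fin.revPerm_symm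
  refine fun π => Equiv.ext fun x => ?_
  simp only [reverseComplementInverse, mul_inv_rev, inv_inv, hrev, Perm.mul_apply,
    Fin.revPerm_apply, Fin.rev_rev]

theorem AvoidsMaxFirst.reverseComplementInverse {inc : Prop} (h : AvoidsMaxFirst inc π) :
    AvoidsMaxFirst inc (reverseComplementInverse π) := by
  intro x y z hxy hyz hyx hzx
  simp only [reverseComplementInverse_apply, Fin.rev_lt_rev] at hyx hzx ⊢
  have hπ (w) : π (π⁻¹ w) = w := π.apply_symm_apply w
  have hyx' := Fin.rev_lt_rev.2 hxy
  have hzy' := Fin.rev_lt_rev.2 hyz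
  rcases (π⁻¹.injective.ne hzy'.ne).lt_or_gt with hlt | hlt
  · have := h _ _ _ hzx hlt
    simp only [hπ, hyx', hzy', hzy'.trans hyx', forall_const, true_iff] at this
    exact iff_of_true hlt this
  · have := h _ _ _ hyx hlt
    simp only [hπ, hyx', hzy'.not_gt, hzy'.trans hyx', forall_const, false_iff] at this
    exact iff_of_false hlt.not_gt this

theorem leftDesc_reverseComplementInverse :
    LeftDesc (reverseComplementInverse π) ↔ TopDesc π := by
  simp only [LeftDesc, TopDesc, reverseComplementInverse_apply, Fin.rev_lt_rev]
  constructor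
  · intro h u v hu hv
    simpa using h u.rev v.rev (by rw [Fin.val_rev]; omega) (by rw [Fin.val_rev]; omega)
  · intro h i j hi hj
    exact h _ _ (by rw [Fin.val_rev]; omega) (by rw [Fin.val_rev]; omega)

end reverseComplementInverse

section insertEntryOne

variable {m : ℕ} {j : Fin (m + 2)} {e : Perm (Fin (m + 1))}

theorem leftDesc_insertEntry_one : LeftDesc (insertEntry 1 (j, e)) ↔ (j : ℕ) ≤ e 0 := by
  rw [leftDesc_iff, insertEntry_self, insertEntry_one_zero, lt_succAbove_iff_le_val]

theorem topDesc_insertEntry_one (hj : (j : ℕ) ≤ e 0) :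
    TopDesc (insertEntry 1 (j, e)) ↔ TopDesc e := by
  rcases (Fin.le_last (e 0)).eq_or_lt with he | he
  · refine iff_of_true (topDesc_of_apply_zero ?_) (topDesc_of_apply_zero he)
    rw [insertEntry_one_zero, Fin.succAbove_of_le_castSucc _ _ hj, he, Fin.succ_last]
  · have hjm : (j : ℕ) < m := hj.trans_lt he
    have hval (x : Fin (m + 1)) {c : ℕ} (hc : c < 2) :
        (j.succAbove x : ℕ) + c + 1 = m + 2 ↔ (x : ℕ) + c + 1 = m + 1 := by
      rcases lt_or_ge (x : ℕ) j with h | h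
      · rw [Fin.succAbove_of_castSucc_lt _ _ h, Fin.val_castSucc]; omega
      · rw [Fin.succAbove_of_le_castSucc _ _ h, Fin.val_succ]; omega
    have h1 (x) := hval x zero_lt_two
    have h2 (x) := hval x one_lt_two
    simp only [add_assoc, zero_add, Nat.reduceAdd] at h1 h2
    have hj1 : ¬ (j : ℕ) + 1 = m + 2 := by omega
    have hj2 : ¬ (j : ℕ) + 2 = m + 2 := by omega
    simp only [topDesc_iff, Fin.forall_iff_succAbove 1, insertEntry_self, insertEntry_succAbove,
      Fin.succAbove_lt_succAbove_iff, h1, h2, hj1, hj2, IsEmpty.forall_iff, implies_true, true_and]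

/-- The inserted entry `j` is at most the first entry of `e`, and the entries of `e` below its first
one must all be at least `j`, or all be less than `j`; this leaves a single choice for `j`. -/
theorem card_avoidsMaxFirst_and_leftDesc_and {inc : Prop} {P : Perm (Fin (m + 2)) → Prop}
    {Q : Perm (Fin (m + 1)) → Prop}
    (hPQ : ∀ (j : Fin (m + 2)) (e : Perm (Fin (m + 1))), (j : ℕ) ≤ e 0 →
      (P (insertEntry 1 (j, e)) ↔ Q e)) :
    Nat.card {π : Perm (Fin (m + 2)) // AvoidsMaxFirst inc π ∧ LeftDesc π ∧ P π} =
      Nat.card {e : Perm (Fin (m + 1)) // AvoidsMaxFirst inc e ∧ Q e} := by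
  classical
  let second (e : Perm (Fin (m + 1))) : Fin (m + 2) := if inc then 0 else (e 0).castSucc
  rw [← card_subtype_fst_eq_and second]
  refine (Nat.card_congr ((insertEntry 1).subtypeEquiv ?_)).symm
  rintro ⟨j, e⟩
  have hsecond : j = second e ↔ (j : ℕ) = if inc then 0 else (e 0 : ℕ) := by
    simp only [second, Fin.ext_iff]
    split_ifs <;> rfl
  rw [leftDesc_insertEntry_one, hsecond]
  constructor
  · rintro ⟨hj, he, hQ⟩
    have hle : (j : ℕ) ≤ e 0 := by rw [hj]; split_ifs <;> omega
    exact ⟨(avoidsMaxFirst_insertEntry_one hle).2 ⟨he, (forall_lt_le_iff_iff hle).2 hj⟩, hle,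
      (hPQ j e hle).2 hQ⟩
  · rintro ⟨hav, hle, hP⟩
    obtain ⟨he, hj⟩ := (avoidsMaxFirst_insertEntry_one hle).1 hav
    exact ⟨(forall_lt_le_iff_iff hle).1 hj, he, (hPQ j e hle).1 hP⟩

end insertEntryOne

theorem card_avoidsMaxFirst_and_leftDesc (inc : Prop) (n : ℕ) :
    Nat.card {π : Perm (Fin (n + 1)) // AvoidsMaxFirst inc π ∧ LeftDesc π} = catalan n := by
  cases n with
  | zero =>
    simp [AvoidsMaxFirst, LeftDesc]
  | succ m =>
    rw [← card_avoidsMaxFirst inc]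
    simpa only [and_true] using card_avoidsMaxFirst_and_leftDesc_and (inc := inc) (m := m)
      (P := fun _ => True) (Q := fun _ => True) fun _ _ _ => Iff.rfl

theorem card_avoidsMaxFirst_and_topDesc (inc : Prop) (n : ℕ) :
    Nat.card {π : Perm (Fin (n + 1)) // AvoidsMaxFirst inc π ∧ TopDesc π} = catalan n := by
  rw [← card_avoidsMaxFirst_and_leftDesc inc]
  refine Nat.card_congr (reverseComplementInverse_involutive.toPerm.subtypeEquiv fun π => ?_)
  refine and_congr ⟨fun h => h.reverseComplementInverse, fun h => ?_⟩
    leftDesc_reverseComplementInverse.symm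
  rw [← reverseComplementInverse_involutive π]
  exact h.reverseComplementInverse

theorem card_avoidsMaxFirst_and_leftDesc_and_topDesc (inc : Prop) (m : ℕ) :
    Nat.card {π : Perm (Fin (m + 2)) // AvoidsMaxFirst inc π ∧ LeftDesc π ∧ TopDesc π} =
      catalan m := by
  rw [card_avoidsMaxFirst_and_leftDesc_and fun j e hj => topDesc_insertEntry_one hj,
    card_avoidsMaxFirst_and_topDesc]

/-! ### Gluing a permutation of the left columns to a permutation of the upper rows -/

theorem exists_viaEmbedding_eq {α β : Type*} (ι : α ↪ β) {θ : Perm β}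
    (hθ : ∀ y ∉ Set.range ι, θ y = y) : ∃ τ : Perm α, τ.viaEmbedding ι = θ := by
  have hmem (y) : θ y ∈ Set.range ι ↔ y ∈ Set.range ι := by
    refine not_iff_not.1 ⟨fun h => ?_, fun h => (hθ y h).symm ▸ h⟩
    rwa [θ.injective (hθ _ h)] at h
  refine ⟨(Equiv.ofInjective ι ι.injective).symm.permCongr (θ.subtypePerm hmem), ?_⟩
  ext y : 1
  by_cases hy : y ∈ Set.range ι
  · obtain ⟨x, rfl⟩ := hy
    simp [Perm.viaEmbedding_apply, Equiv.apply_ofInjective_symm, Equiv.ofInjective_apply]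
  · rw [Perm.viaEmbedding_apply_of_notMem _ _ _ hy, hθ y hy]

theorem viaEmbedding_inv {α β : Type*} (ι : α ↪ β) (τ : Perm α) :
    τ⁻¹.viaEmbedding ι = (τ.viaEmbedding ι)⁻¹ := by
  simp only [← Perm.viaEmbeddingHom_apply, map_inv]

theorem perm_eq_of_lt_iff_lt {n : ℕ} {π ρ : Perm (Fin n)} (h : ∀ x y, π x < π y ↔ ρ x < ρ y) :
    π = ρ := by
  have hmono : StrictMono (π * ρ⁻¹) := fun x y hxy =>
    (h (ρ⁻¹ x) (ρ⁻¹ y)).2 (by simpa using hxy)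
  exact mul_inv_eq_one.1 ((Perm.monotone_iff _).1 hmono.monotone)

theorem val_eq_of_strictMono_of_forall_lt_mem_range {m k : ℕ} {g : Fin m → ℕ} (hg : StrictMono g)
    (hk : ∀ c < k, c ∈ Set.range g) (y : Fin m) (hy : (y : ℕ) < k) : g y = y := by
  induction y using WellFoundedLT.induction with
  | ind y ih =>
    obtain ⟨z, hz⟩ := hk y hy
    rcases lt_trichotomy z y with hzy | rfl | hyz
    · have hfix := ih z hzy (lt_trans (Fin.lt_def.1 hzy) hy)
      exact absurd (hz.symm.trans hfix) (Fin.val_ne_of_ne hzy.ne')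
    · exact hz
    · have hgy : g y < y := hz ▸ hg hyz
      have hfix := hg.injective (ih ⟨g y, hgy.trans y.isLt⟩ hgy (hgy.trans hy))
      exact absurd (Fin.val_eq_of_eq hfix) hgy.ne

section glue

variable {k r : ℕ}

/-- The inclusion of the first `k + 2` columns, or of the lowest `k + 2` rows. -/
abbrev lowerEmb (k r : ℕ) : Fin (k + 2) ↪ Fin (k + (r + 2)) := Fin.castLEEmb (by omega)

/-- The inclusion of the columns, or rows, from `k` on. -/
abbrev upperEmb (k r : ℕ) : Fin (r + 2) ↪ Fin (k + (r + 2)) := Fin.natAddEmb k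

/-- The permutation obtained from `ρ`, placed in the first `k + 2` columns, by permuting the values
from `k` on according to `τ`. -/
noncomputable def glue (ρ : Perm (Fin (k + 2))) (τ : Perm (Fin (r + 2))) :
    Perm (Fin (k + (r + 2))) :=
  τ.viaEmbedding (upperEmb k r) * ρ.viaEmbedding (lowerEmb k r)

open Classical in
/-- The exchange of the two leftmost columns if the two largest values of `ρ` form a descent: it
turns `τ` with `τ 0 < τ 1` into the pattern that the values from `k` on form in `glue ρ τ`. -/
noncomputable def orient (r : ℕ) (ρ : Perm (Fin (k + 2))) : Perm (Fin (r + 2)) :=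
  if TopDesc ρ then swap 0 1 else 1

/-- The increasing enumeration of the columns in which `glue ρ τ` has a value of at least `k`; it
does not depend on `τ`. -/
noncomputable def upperColumn (ρ : Perm (Fin (k + 2))) (s : Fin (r + 2)) : Fin (k + (r + 2)) :=
  ρ⁻¹.viaEmbedding (lowerEmb k r) (upperEmb k r (orient r ρ s))

section

variable (ρ : Perm (Fin (k + 2))) (τ : Perm (Fin (r + 2)))

theorem mem_range_lower {x : Fin (k + (r + 2))} :
    x ∈ Set.range (lowerEmb k r) ↔ (x : ℕ) < k + 2 := by
  simp [Fin.range_castLE]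

theorem mem_range_upper {x : Fin (k + (r + 2))} : x ∈ Set.range (upperEmb k r) ↔ k ≤ x := by
  change x ∈ Set.range (Fin.natAdd k) ↔ _
  rw [Fin.range_natAdd, Set.mem_ofPred]

theorem glue_lower (x : Fin (k + 2)) :
    glue ρ τ (lowerEmb k r x) = τ.viaEmbedding (upperEmb k r) (lowerEmb k r (ρ x)) := by
  rw [glue, Perm.mul_apply, Perm.viaEmbedding_apply]

theorem glue_upperColumn (s : Fin (r + 2)) :
    glue ρ τ (upperColumn ρ s) = upperEmb k r ((τ * orient r ρ) s) := by
  rw [glue, upperColumn, viaEmbedding_inv, Perm.mul_apply, Perm.coe_inv, Equiv.apply_symm_apply,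
    Perm.viaEmbedding_apply, Perm.mul_apply]

theorem exists_upperColumn_eq {ρ : Perm (Fin (k + 2))} {τ : Perm (Fin (r + 2))}
    {x : Fin (k + (r + 2))} (hx : k ≤ (glue ρ τ x : ℕ)) : ∃ s, upperColumn ρ s = x := by
  obtain ⟨w, hw⟩ := mem_range_upper.2 hx
  refine ⟨(τ * orient r ρ).symm w, (glue ρ τ).injective ?_⟩
  rw [glue_upperColumn, Equiv.apply_symm_apply, hw]

theorem orient_apply_of_two_le {s : Fin (r + 2)} (hs : 2 ≤ (s : ℕ)) : orient r ρ s = s := by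
  rw [orient]
  split_ifs
  · refine swap_apply_of_ne_of_ne ?_ ?_ <;> rintro rfl <;> simp at hs
  · rfl

theorem upperColumn_of_two_le {s : Fin (r + 2)} (hs : 2 ≤ (s : ℕ)) :
    upperColumn ρ s = upperEmb k r s := by
  rw [upperColumn, orient_apply_of_two_le ρ hs]
  exact Perm.viaEmbedding_apply_of_notMem _ _ _
    (mem_range_lower.not.2 (Nat.add_le_add_left hs k).not_gt)

theorem viaEmbedding_lower_upper_zero :
    ρ.viaEmbedding (lowerEmb k r) (upperEmb k r 0) = lowerEmb k r (ρ (Fin.natAdd k 0)) :=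
  ρ.viaEmbedding_apply (lowerEmb k r) (Fin.natAdd k 0)

theorem viaEmbedding_lower_upper_one :
    ρ.viaEmbedding (lowerEmb k r) (upperEmb k r 1) = lowerEmb k r (ρ (Fin.natAdd k 1)) :=
  ρ.viaEmbedding_apply (lowerEmb k r) (Fin.natAdd k 1)

theorem topDesc_iff_natAdd : TopDesc ρ ↔ ρ⁻¹ (Fin.natAdd k 1) < ρ⁻¹ (Fin.natAdd k 0) := by
  refine ⟨fun h => h _ _ rfl rfl, fun h u v hu hv => ?_⟩
  rwa [show u = Fin.natAdd k 1 from Fin.ext (by simpa using hu),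
    show v = Fin.natAdd k 0 from Fin.ext (by simpa using hv)]

theorem upperColumn_zero_lt_one :
    upperColumn (r := r) ρ 0 < upperColumn ρ 1 ∧ (upperColumn (r := r) ρ 1 : ℕ) < k + 2 := by
  rw [upperColumn, upperColumn, orient]
  split_ifs with h
  · rw [swap_apply_left, swap_apply_right, viaEmbedding_lower_upper_zero,
      viaEmbedding_lower_upper_one]
    exact ⟨(topDesc_iff_natAdd ρ).1 h, (ρ⁻¹ (Fin.natAdd k 0)).isLt⟩
  · rw [Perm.one_apply, Perm.one_apply, viaEmbedding_lower_upper_zero,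
      viaEmbedding_lower_upper_one]
    refine ⟨lt_of_le_of_ne (not_lt.1 fun h' => h ((topDesc_iff_natAdd ρ).2 h')) ?_,
      (ρ⁻¹ (Fin.natAdd k 1)).isLt⟩
    simp

theorem upperColumn_lt_add_two {s : Fin (r + 2)} (hs : (s : ℕ) < 2) :
    (upperColumn ρ s : ℕ) < k + 2 := by
  obtain ⟨h01, h1⟩ := upperColumn_zero_lt_one (r := r) ρ
  obtain hs | hs : (s : ℕ) = 0 ∨ (s : ℕ) = 1 := by omega
  · obtain rfl : s = 0 := Fin.ext hs
    exact (Fin.lt_def.1 h01).trans h1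
  · obtain rfl : s = 1 := Fin.ext hs
    exact h1

theorem upperColumn_strictMono : StrictMono (upperColumn (r := r) ρ) := by
  intro s t hst
  rw [Fin.lt_def] at hst
  rcases lt_or_ge (t : ℕ) 2 with ht | ht
  · obtain rfl : s = 0 := Fin.ext (by rw [Fin.val_zero]; omega)
    obtain rfl : t = 1 := Fin.ext (by rw [Fin.val_one]; omega)
    exact (upperColumn_zero_lt_one ρ).1
  · rw [upperColumn_of_two_le ρ ht, Fin.lt_def, Fin.natAddEmb_apply, Fin.val_natAdd]
    rcases lt_or_ge (s : ℕ) 2 with hs | hs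
    · have := upperColumn_lt_add_two ρ hs
      omega
    · rw [upperColumn_of_two_le ρ hs, Fin.natAddEmb_apply, Fin.val_natAdd]
      omega

theorem upperColumn_add_one_le_iff {s : Fin (r + 2)} {c : ℕ} (hc : 2 ≤ c) :
    (upperColumn ρ s : ℕ) + 1 ≤ k + c ↔ (s : ℕ) + 1 ≤ c := by
  rcases lt_or_ge (s : ℕ) 2 with hs | hs
  · have := upperColumn_lt_add_two ρ hs
    omega
  · rw [upperColumn_of_two_le ρ hs, Fin.natAddEmb_apply, Fin.val_natAdd]
    omega

theorem viaEmbedding_upper_lower_of_lt {y : Fin (k + 2)} (hy : (y : ℕ) < k) :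
    τ.viaEmbedding (upperEmb k r) (lowerEmb k r y) = lowerEmb k r y :=
  Perm.viaEmbedding_apply_of_notMem _ _ _ (mem_range_upper.not.2 hy.not_ge)

theorem viaEmbedding_upper_lower_natAdd (z : Fin 2) :
    τ.viaEmbedding (upperEmb k r) (lowerEmb k r (Fin.natAdd k z)) =
      upperEmb k r (τ (Fin.castLE (by omega) z)) :=
  τ.viaEmbedding_apply (upperEmb k r) (Fin.castLE (by omega) z)

theorem viaEmbedding_upper_comp_lower_strictMono {τ : Perm (Fin (r + 2))} (hτ : τ 0 < τ 1) :
    StrictMono (τ.viaEmbedding (upperEmb k r) ∘ lowerEmb k r) := by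
  intro x y hxy
  simp only [Function.comp_apply]
  induction y using Fin.addCases with
  | left y =>
    have hx : (x : ℕ) < k := (Fin.lt_def.1 hxy).trans y.isLt
    rw [viaEmbedding_upper_lower_of_lt τ hx, viaEmbedding_upper_lower_of_lt τ (by exact y.isLt)]
    exact hxy
  | right z =>
    induction x using Fin.addCases with
    | left x =>
      rw [viaEmbedding_upper_lower_of_lt τ (by exact x.isLt), viaEmbedding_upper_lower_natAdd]
      exact Fin.lt_def.2 (Nat.lt_add_right _ x.isLt)
    | right w =>
      rw [Fin.natAdd_lt_natAdd_iff] at hxy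
      obtain ⟨rfl, rfl⟩ : w = 0 ∧ z = 1 := by omega
      rw [viaEmbedding_upper_lower_natAdd, viaEmbedding_upper_lower_natAdd]
      exact (Fin.natAdd_lt_natAdd_iff k).2 hτ

theorem glue_lower_lt_glue_lower_iff {τ : Perm (Fin (r + 2))} (hτ : τ 0 < τ 1)
    {x y : Fin (k + 2)} : glue ρ τ (lowerEmb k r x) < glue ρ τ (lowerEmb k r y) ↔ ρ x < ρ y := by
  rw [glue_lower, glue_lower]
  exact (viaEmbedding_upper_comp_lower_strictMono hτ).lt_iff_lt

end

theorem exists_glue_eq {π : Perm (Fin (k + (r + 2)))} (hπ : ∀ x, (π x : ℕ) < k → (x : ℕ) < k + 2) :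
    ∃ ρ : Perm (Fin (k + 2)), ∃ τ : Perm (Fin (r + 2)), τ 0 < τ 1 ∧ glue ρ τ = π := by
  let ρ : Perm (Fin (k + 2)) := (Tuple.sort (π ∘ lowerEmb k r))⁻¹
  have hmono : StrictMono fun y => π (lowerEmb k r (ρ⁻¹ y)) :=
    (Tuple.monotone_sort (π ∘ lowerEmb k r)).strictMono_of_injective
      (π.injective.comp ((lowerEmb k r).injective.comp (Equiv.injective _)))
  have hval : ∀ y : Fin (k + 2), (y : ℕ) < k → (π (lowerEmb k r (ρ⁻¹ y)) : ℕ) = y := by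
    refine val_eq_of_strictMono_of_forall_lt_mem_range (fun _ _ h => hmono h) fun c hc => ?_
    obtain ⟨x, hx⟩ := π.surjective ⟨c, by omega⟩
    have hxc : (π x : ℕ) = c := Fin.val_eq_of_eq hx
    refine ⟨ρ ⟨x, hπ x (hxc.trans_lt hc)⟩, ?_⟩
    simp only [Perm.coe_inv, Equiv.symm_apply_apply]
    exact hxc
  obtain ⟨τ, hτ⟩ := exists_viaEmbedding_eq (upperEmb k r)
      (θ := π * ρ⁻¹.viaEmbedding (lowerEmb k r)) fun y hy => by
    have hyk : (y : ℕ) < k := not_le.1 (mem_range_upper.not.1 hy)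
    obtain ⟨y, rfl⟩ : y ∈ Set.range (lowerEmb k r) := mem_range_lower.2 (by omega)
    rw [Perm.mul_apply, Perm.viaEmbedding_apply]
    exact Fin.ext (hval y hyk)
  refine ⟨ρ, τ, (Fin.natAdd_lt_natAdd_iff k).1 ?_, ?_⟩
  · change upperEmb k r (τ 0) < upperEmb k r (τ 1)
    rw [← Perm.viaEmbedding_apply, ← Perm.viaEmbedding_apply, hτ, Perm.mul_apply, Perm.mul_apply,
      viaEmbedding_lower_upper_zero, viaEmbedding_lower_upper_one]
    exact hmono ((Fin.natAdd_lt_natAdd_iff k).2 Fin.zero_lt_one)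
  · rw [glue, hτ, viaEmbedding_inv, inv_mul_cancel_right]

theorem glue_injective {ρ ρ' : Perm (Fin (k + 2))} {τ τ' : Perm (Fin (r + 2))} (hτ : τ 0 < τ 1)
    (hτ' : τ' 0 < τ' 1) (h : glue ρ τ = glue ρ' τ') : ρ = ρ' ∧ τ = τ' := by
  obtain rfl : ρ = ρ' := perm_eq_of_lt_iff_lt fun x y => by
    rw [← glue_lower_lt_glue_lower_iff ρ hτ, h, glue_lower_lt_glue_lower_iff ρ' hτ']
  exact ⟨rfl, Perm.viaEmbeddingHom_injective (upperEmb k r) (mul_right_cancel h)⟩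

theorem leftDesc_glue {ρ : Perm (Fin (k + 2))} {τ : Perm (Fin (r + 2))} (hτ : τ 0 < τ 1) :
    LeftDesc (glue ρ τ) ↔ LeftDesc ρ := by
  rw [leftDesc_iff (m := k), ← glue_lower_lt_glue_lower_iff ρ hτ]
  exact leftDesc_iff (m := k + r)

theorem val_lt_of_glue_val_lt {ρ : Perm (Fin (k + 2))} {τ : Perm (Fin (r + 2))}
    {x : Fin (k + (r + 2))} (hx : (glue ρ τ x : ℕ) < k) : (x : ℕ) < k + 2 := by
  by_contra! h
  have hρ : ρ.viaEmbedding (lowerEmb k r) x = x :=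
    Perm.viaEmbedding_apply_of_notMem _ _ _ (mem_range_lower.not.2 h.not_gt)
  obtain ⟨s, rfl⟩ : x ∈ Set.range (upperEmb k r) := mem_range_upper.2 (by omega)
  rw [glue, Perm.mul_apply, hρ, Perm.viaEmbedding_apply] at hx
  exact absurd hx (mem_range_upper.1 ⟨_, rfl⟩).not_gt

section diagram

variable {b : Fin (k + (r + 2)) → ℕ} {b' : Fin (r + 2) → ℕ} {ρ : Perm (Fin (k + 2))}
  {τ : Perm (Fin (r + 2))}

theorem upperColumn_add_one_le_glue_iff (hb : ∀ t, k + 2 ≤ b t)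
    (hb' : ∀ s, b (upperEmb k r s) = k + b' s) (s t : Fin (r + 2)) :
    (upperColumn ρ s : ℕ) + 1 ≤ b (glue ρ τ (upperColumn ρ t)) ↔
      (s : ℕ) + 1 ≤ b' ((τ * orient r ρ) t) := by
  have h2 := hb (upperEmb k r ((τ * orient r ρ) t))
  rw [hb'] at h2
  rw [glue_upperColumn, hb', upperColumn_add_one_le_iff ρ (by omega)]

theorem isTransversal_glue (hb : ∀ t, k + 2 ≤ b t) (hb' : ∀ s, b (upperEmb k r s) = k + b' s) :
    IsTransversal b (glue ρ τ) ↔ IsTransversal b' (τ * orient r ρ) := by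
  have hcell (s) := upperColumn_add_one_le_glue_iff (ρ := ρ) (τ := τ) hb hb' s s
  refine ⟨fun h s => (hcell s).1 (h _), fun h x => ?_⟩
  rcases lt_or_ge (glue ρ τ x : ℕ) k with hx | hx
  · exact (val_lt_of_glue_val_lt hx).trans_le (hb _)
  · obtain ⟨s, rfl⟩ := exists_upperColumn_eq hx
    exact (hcell s).2 (h s)

/-- An occurrence that uses a column from `k + 2` on uses no row below `k`, since those rows are
too short; all its columns are then of the form `upperColumn ρ s`. -/
theorem containsIn_glue {p : ℕ} {σ : Perm (Fin p)} (hb : ∀ t, k + 2 ≤ b t)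
    (hflat : ∀ t : Fin (k + (r + 2)), (t : ℕ) < k → b t ≤ k + 2)
    (hb' : ∀ s, b (upperEmb k r s) = k + b' s) (hτ : τ 0 < τ 1) :
    ContainsIn b (glue ρ τ) σ ↔ ContainsPat ρ σ ∨ ContainsIn b' (τ * orient r ρ) σ := by
  have hcell := upperColumn_add_one_le_glue_iff (ρ := ρ) (τ := τ) hb hb'
  have hval (s t) : glue ρ τ (upperColumn ρ s) < glue ρ τ (upperColumn ρ t) ↔
      (τ * orient r ρ) s < (τ * orient r ρ) t := by
    rw [glue_upperColumn, glue_upperColumn]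
    exact Fin.natAdd_lt_natAdd_iff k
  constructor
  · rintro ⟨φ, hφ, hord, hcells⟩
    by_cases hleft : ∀ s, (φ s : ℕ) < k + 2
    · refine .inl ⟨fun s => ⟨φ s, hleft s⟩, fun _ _ h => hφ h, fun s t => ?_⟩
      rw [hord, ← glue_lower_lt_glue_lower_iff ρ hτ]
      rfl
    · obtain ⟨s, hs⟩ := not_forall.1 hleft
      have hrow (t) : k ≤ (glue ρ τ (φ t) : ℕ) := by
        by_contra! ht
        have := hcells s t
        have := hflat _ ht
        omega
      choose ψ hψ using fun t => exists_upperColumn_eq (hrow t)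
      simp only [← hψ, hcell, hval] at hord hcells
      refine .inr ⟨ψ, fun s t h => (upperColumn_strictMono ρ).lt_iff_lt.1 ?_, hord, hcells⟩
      rw [hψ, hψ]
      exact hφ h
  · rintro (⟨φ, hφ, hord⟩ | ⟨φ, hφ, hord, hcells⟩)
    · refine ⟨lowerEmb k r ∘ φ, fun _ _ h => hφ h, fun s t => ?_, fun s t => ?_⟩
      · rw [hord, ← glue_lower_lt_glue_lower_iff ρ hτ]
        rfl
      · exact (φ s).isLt.trans_le (hb _)
    · exact ⟨upperColumn ρ ∘ φ, (upperColumn_strictMono ρ).comp hφ,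
        fun s t => (hord s t).trans (hval _ _).symm, fun s t => (hcell _ _).2 (hcells s t)⟩

end diagram

end glue

/-! ### Counting the glued permutations -/

theorem card_subtype_prod_and_iff {α β : Type*} [Finite α] [Finite β] (P U : α → Prop)
    (Q V : β → Prop) :
    Nat.card {p : α × β // (P p.1 ∧ Q p.2) ∧ (U p.1 ↔ V p.2)} =
      Nat.card {a // P a ∧ U a} * Nat.card {b // Q b ∧ V b} +
        Nat.card {a // P a ∧ ¬ U a} * Nat.card {b // Q b ∧ ¬ V b} := by
  rw [← card_subtype_and_add_card_subtype_and_not _ fun p : α × β => U p.1, ← Nat.card_prod,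
    ← Nat.card_prod, ← Nat.card_congr Equiv.subtypeProdEquivProd,
    ← Nat.card_congr Equiv.subtypeProdEquivProd]
  congr 1 <;> exact Nat.card_congr (Equiv.subtypeEquivRight fun p => by tauto)

theorem not_leftDesc_iff {m : ℕ} {π : Perm (Fin (m + 2))} : ¬ LeftDesc π ↔ π 0 < π 1 := by
  rw [leftDesc_iff, not_lt, le_iff_lt_or_eq, or_iff_left (π.injective.ne Fin.zero_ne_one)]

theorem SYcardLeftDesc_eq {n p : ℕ} (b : Fin n → ℕ) (σ : Perm (Fin p)) :
    SYcardLeftDesc b σ =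
      Nat.card {π // (IsTransversal b π ∧ ¬ ContainsIn b π σ) ∧ LeftDesc π} := by
  simp only [SYcardLeftDesc, LeftDesc, and_assoc]

theorem SYcardLeftAsc_eq {m p : ℕ} (b : Fin (m + 2) → ℕ) (σ : Perm (Fin p)) :
    SYcardLeftAsc b σ =
      Nat.card {π // (IsTransversal b π ∧ ¬ ContainsIn b π σ) ∧ ¬ LeftDesc π} := by
  have hasc (π : Perm (Fin (m + 2))) :
      (∀ i j : Fin (m + 2), (i : ℕ) = 0 → (j : ℕ) = 1 → π i < π j) ↔ ¬ LeftDesc π := by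
    refine ⟨fun h => not_leftDesc_iff.2 (h 0 1 rfl rfl), fun h i j hi hj => ?_⟩
    rw [show i = 0 from Fin.ext hi, show j = 1 from Fin.ext hj]
    exact not_leftDesc_iff.1 h
  simp only [SYcardLeftAsc, hasc, and_assoc]

section count

variable {k r : ℕ}

theorem leftDesc_mul_orient_iff {ρ : Perm (Fin (k + 2))} {τ : Perm (Fin (r + 2))} :
    (TopDesc ρ ↔ LeftDesc (τ * orient r ρ)) ↔ τ 0 < τ 1 := by
  rw [orient]
  split_ifs with h
  · rw [leftDesc_iff, iff_true_left h, Perm.mul_apply, Perm.mul_apply, swap_apply_left,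
      swap_apply_right]
  · rw [mul_one, iff_false_left h, not_leftDesc_iff]

variable {b : Fin (k + (r + 2)) → ℕ} {b' : Fin (r + 2) → ℕ}

theorem card_transversal_and {p : ℕ} {σ : Perm (Fin p)} (hb : ∀ t, k + 2 ≤ b t)
    (hflat : ∀ t : Fin (k + (r + 2)), (t : ℕ) < k → b t ≤ k + 2)
    (hb' : ∀ s, b (upperEmb k r s) = k + b' s) {P : Perm (Fin (k + (r + 2))) → Prop}
    {Q : Perm (Fin (k + 2)) → Prop}
    (hPQ : ∀ (ρ : Perm (Fin (k + 2))) (τ : Perm (Fin (r + 2))), τ 0 < τ 1 → (P (glue ρ τ) ↔ Q ρ)) :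
    Nat.card {π // (IsTransversal b π ∧ ¬ ContainsIn b π σ) ∧ P π} =
      Nat.card {q : Perm (Fin (k + 2)) × Perm (Fin (r + 2)) //
        ((¬ ContainsPat q.1 σ ∧ Q q.1) ∧ IsTransversal b' q.2 ∧ ¬ ContainsIn b' q.2 σ) ∧
          (TopDesc q.1 ↔ LeftDesc q.2)} := by
  have hglue (ρ : Perm (Fin (k + 2))) (τ : Perm (Fin (r + 2))) (hτ : τ 0 < τ 1) :
      (IsTransversal b (glue ρ τ) ∧ ¬ ContainsIn b (glue ρ τ) σ) ∧ P (glue ρ τ) ↔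
        (¬ ContainsPat ρ σ ∧ Q ρ) ∧ IsTransversal b' (τ * orient r ρ) ∧
          ¬ ContainsIn b' (τ * orient r ρ) σ := by
    rw [isTransversal_glue hb hb', containsIn_glue hb hflat hb' hτ, hPQ ρ τ hτ]
    tauto
  let shear : Perm (Fin (k + 2)) × Perm (Fin (r + 2)) ≃ Perm (Fin (k + 2)) × Perm (Fin (r + 2)) :=
    Equiv.prodShear (Equiv.refl _) fun ρ => Equiv.mulRight (orient r ρ)
  refine (Nat.card_congr ?_).symm.trans (Nat.card_congr (shear.subtypeEquiv
    (p := fun q => ((¬ ContainsPat q.1 σ ∧ Q q.1) ∧ IsTransversal b' (q.2 * orient r q.1) ∧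
      ¬ ContainsIn b' (q.2 * orient r q.1) σ) ∧ q.2 0 < q.2 1)
    fun q => and_congr_right fun _ => leftDesc_mul_orient_iff.symm))
  refine Equiv.ofBijective (fun q => ⟨glue q.1.1 q.1.2, (hglue _ _ q.2.2).2 q.2.1⟩) ⟨?_, ?_⟩
  · rintro ⟨⟨ρ, τ⟩, _, hτ⟩ ⟨⟨ρ', τ'⟩, _, hτ'⟩ h
    obtain ⟨rfl, rfl⟩ := glue_injective hτ hτ' (congrArg Subtype.val h)
    rfl
  · rintro ⟨π, hπ⟩
    obtain ⟨ρ, τ, hτ, rfl⟩ := exists_glue_eq (π := π) fun x hx =>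
      Nat.lt_of_succ_le ((hπ.1.1 x).trans (hflat _ hx))
    exact ⟨⟨(ρ, τ), (hglue ρ τ hτ).1 hπ, hτ⟩, rfl⟩

theorem card_transversal_and_eq_add {p : ℕ} {σ : Perm (Fin p)} (hb : ∀ t, k + 2 ≤ b t)
    (hflat : ∀ t : Fin (k + (r + 2)), (t : ℕ) < k → b t ≤ k + 2)
    (hb' : ∀ s, b (upperEmb k r s) = k + b' s) {P : Perm (Fin (k + (r + 2))) → Prop}
    {Q : Perm (Fin (k + 2)) → Prop}
    (hPQ : ∀ (ρ : Perm (Fin (k + 2))) (τ : Perm (Fin (r + 2))), τ 0 < τ 1 → (P (glue ρ τ) ↔ Q ρ)) :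
    Nat.card {π // (IsTransversal b π ∧ ¬ ContainsIn b π σ) ∧ P π} =
      Nat.card {ρ // (¬ ContainsPat ρ σ ∧ Q ρ) ∧ TopDesc ρ} * SYcardLeftDesc b' σ +
        (Nat.card {ρ // ¬ ContainsPat ρ σ ∧ Q ρ} -
          Nat.card {ρ // (¬ ContainsPat ρ σ ∧ Q ρ) ∧ TopDesc ρ}) * SYcardLeftAsc b' σ := by
  rw [card_transversal_and hb hflat hb' hPQ,
    card_subtype_prod_and_iff (fun ρ => ¬ ContainsPat ρ σ ∧ Q ρ) TopDesc
      (fun υ => IsTransversal b' υ ∧ ¬ ContainsIn b' υ σ) LeftDesc,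
    SYcardLeftDesc_eq, SYcardLeftAsc_eq,
    ← card_subtype_and_add_card_subtype_and_not (fun ρ => ¬ ContainsPat ρ σ ∧ Q ρ) TopDesc,
    Nat.add_sub_cancel_left]

theorem card_transversal_of_flat {σ : Perm (Fin 3)} (hσ : σ = p312 ∨ σ = p321)
    (hb : ∀ t, k + 2 ≤ b t) (hflat : ∀ t : Fin (k + (r + 2)), (t : ℕ) < k → b t ≤ k + 2)
    (hb' : ∀ s, b (upperEmb k r s) = k + b' s) :
    SYcard b σ = catalan (k + 1) * SYcardLeftDesc b' σ +
      (catalan (k + 2) - catalan (k + 1)) * SYcardLeftAsc b' σ ∧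
    SYcardLeftDesc b σ = catalan k * SYcardLeftDesc b' σ +
      (catalan (k + 1) - catalan k) * SYcardLeftAsc b' σ := by
  constructor
  · simpa only [SYcard, and_true, not_containsPat_iff hσ, card_avoidsMaxFirst,
      card_avoidsMaxFirst_and_topDesc] using
      card_transversal_and_eq_add (σ := σ) (P := fun _ => True) (Q := fun _ => True)
        hb hflat hb' fun _ _ _ => Iff.rfl
  · rw [SYcardLeftDesc_eq b, card_transversal_and_eq_add hb hflat hb' fun _ _ => leftDesc_glue]
    simp only [not_containsPat_iff hσ, and_assoc, card_avoidsMaxFirst_and_leftDesc,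
      card_avoidsMaxFirst_and_leftDesc_and_topDesc]

end count

/-- The diagram `Y''` formed by the rows of the diagram `b` from height `k` on, without the `k`
leftmost columns. The subtraction truncates on rows shorter than `k`. -/
def rowsAbove {n : ℕ} (k : ℕ) (b : Fin n → ℕ) : Fin (n - k) → ℕ := fun s =>
  b ⟨k + s, by omega⟩ - k

theorem stmt8_general {n k : ℕ} {b : Fin n → ℕ} {σ : Perm (Fin 3)} (hσ : σ = p312 ∨ σ = p321)
    (hkn : k + 2 ≤ n) (hb : ∀ t, k + 2 ≤ b t)
    (hflat : ∀ t : Fin n, (t : ℕ) < k → b t ≤ k + 2) :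
    SYcard b σ = catalan (k + 1) * SYcardLeftDesc (rowsAbove k b) σ +
      (catalan (k + 2) - catalan (k + 1)) * SYcardLeftAsc (rowsAbove k b) σ ∧
    SYcardLeftDesc b σ = catalan k * SYcardLeftDesc (rowsAbove k b) σ +
      (catalan (k + 1) - catalan k) * SYcardLeftAsc (rowsAbove k b) σ := by
  obtain ⟨r, rfl⟩ : ∃ r, n = k + (r + 2) := ⟨n - (k + 2), by omega⟩
  have hrows : ∀ (s : Fin (k + (r + 2) - k)) h, b ⟨k + s, h⟩ = k + rowsAbove k b s := fun s h =>
    (Nat.add_sub_cancel' ((Nat.le_add_right k 2).trans (hb _))).symm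
  generalize rowsAbove k b = b' at hrows ⊢
  revert b'
  rw [Nat.add_sub_cancel_left]
  exact fun b' hrows => card_transversal_of_flat hσ hb hflat fun s => hrows s _

theorem stmt8 (n : ℕ) (b : Fin n → ℕ) (hmono : Monotone b)
    (hb : ∀ y : Fin n, (y : ℕ) + 1 ≤ b y ∧ b y ≤ n)
    (σ : Equiv.Perm (Fin 3)) (hσ : σ = p312 ∨ σ = p321)
    (k : ℕ) (hk : 1 ≤ k) (hkn : k < n)
    (hflat : ∀ t : Fin n, (t : ℕ) < k → b t = k + 2)
    (hcrit : k + 2 < b ⟨k, hkn⟩) :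
    SYcard b σ =
      catalan (k + 1) *
        SYcardLeftDesc (fun s : Fin (n - k) =>
          b ⟨k + (s : ℕ), by have := s.isLt; omega⟩ - k) σ +
      (catalan (k + 2) - catalan (k + 1)) *
        SYcardLeftAsc (fun s : Fin (n - k) =>
          b ⟨k + (s : ℕ), by have := s.isLt; omega⟩ - k) σ ∧
    SYcardLeftDesc b σ =
      catalan k *
        SYcardLeftDesc (fun s : Fin (n - k) =>
          b ⟨k + (s : ℕ), by have := s.isLt; omega⟩ - k) σ +
      (catalan (k + 1) - catalan k) *
        SYcardLeftAsc (fun s : Fin (n - k) =>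
          b ⟨k + (s : ℕ), by have := s.isLt; omega⟩ - k) σ := by
  exact stmt8_general hσ (hcrit.le.trans (hb _).2)
    (fun t => (lt_or_ge (t : ℕ) k).elim (fun h => (hflat t h).ge)
      fun h => hcrit.le.trans (hmono h))
    fun t h => (hflat t h).le
end

section
/- For every m ≥ 2 and σ = (312) or σ = (321): the number of σ-avoiding permutations π of {1,…,m} in which the value m occurs to the left of the value m−1 equals c_{m−1}; consequently, the number of σ-avoiding permutations of {1,…,m} in which m−1 occurs to the left of m equals c_m − c_{m−1}. -/
/-!
Both `312` and `321` begin with their largest letter, so `π` avoids such a pattern iff, for every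
entry of `π`, the entries to its right and below it are pairwise related by a fixed relation `R`:
`>` for `312` and `<` for `321`. Inserting a new maximum at position `i` of `p` keeps this property
iff the entries of `p` from position `i` on are pairwise `R`-related.

Let `F n t` be the number of avoiders of length `n` whose entries from position `t` on are pairwise
`R`-related. For both relations insertion of the maximum gives `F (n + 1) t = ∑ i ≤ t, F n i` for
`t ≤ n`. This is the recursion of the Catalan triangle, with solution
`F n t = (n + t).choose n - (n + t).choose (n + 1)`, so there are `F n n = catalan n` avoiders.

A permutation of length `n + 2` arises from a permutation `q` of length `n` by inserting the second
largest value at a position `j` and then the largest at a position `i`; the largest comes first iff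
`i ≤ j`. For `312` avoidance then forces `i = j`, for `321` it forces `j = n`, and in both cases the
entries of `q` from position `i` on have to be pairwise `R`-related. Hence there are
`∑ i ≤ n, F n i = F (n + 1) (n + 1)` such avoiders.
-/

open Equiv

/-! ### Insertion of the maximum -/

/-- The permutation of `n + 1` letters obtained from `p` by inserting a new largest value at
position `i`. -/
def insertMax {n : ℕ} (i : Fin (n + 1)) (p : Perm (Fin n)) : Perm (Fin (n + 1)) :=
  (finSuccEquiv' i).trans ((optionCongr p).trans (finSuccEquiv' (Fin.last n)).symm)

section insertMax

variable {n : ℕ} (i : Fin (n + 1)) (p : Perm (Fin n))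

@[simp]
lemma insertMax_apply_self : insertMax i p i = Fin.last n := by
  simp [insertMax]

@[simp]
lemma insertMax_apply_succAbove (j : Fin n) :
    insertMax i p (i.succAbove j) = (p j).castSucc := by
  simp [insertMax]

@[simp]
lemma insertMax_symm_last : (insertMax i p).symm (Fin.last n) = i := by
  simp [Equiv.symm_apply_eq]

@[simp]
lemma insertMax_symm_castSucc (v : Fin n) :
    (insertMax i p).symm v.castSucc = i.succAbove (p.symm v) := by
  simp [Equiv.symm_apply_eq]

end insertMax

lemma insertMax_bijective (n : ℕ) :
    Function.Bijective fun x : Fin (n + 1) × Perm (Fin n) => insertMax x.1 x.2 := by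
  rw [Fintype.bijective_iff_injective_and_card]
  refine ⟨?_, by simp [Fintype.card_perm, Nat.factorial_succ]⟩
  rintro ⟨i, p⟩ ⟨j, q⟩ (h : insertMax i p = insertMax j q)
  obtain rfl : i = j := by
    rw [← insertMax_symm_last i p, h, insertMax_symm_last]
  have hpq (a : Fin n) : p a = q a := by
    simpa using Equiv.congr_fun h (i.succAbove a)
  rw [Equiv.ext hpq]

lemma card_subtype_perm_succ {n : ℕ} (P : Perm (Fin (n + 1)) → Prop) :
    Nat.card {π // P π} = ∑ i, Nat.card {p : Perm (Fin n) // P (insertMax i p)} := by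
  let e := Equiv.ofBijective _ (insertMax_bijective n)
  rw [← Nat.card_congr (e.subtypeEquivOfSubtype (p := P)), ← Nat.card_sigma]
  exact Nat.card_congr (subtypeProdEquivSigmaSubtype fun i p => P (insertMax i p))

/-! ### Related suffixes -/

/-- For every entry of `π`, the entries to its right and below it are pairwise related by `R`.
This is avoidance of `312` for `R = (· > ·)` and of `321` for `R = (· < ·)`. The relation is one on
`ℕ` so that the same `R` applies to permutations of every length. -/
def PairwiseRightBelow (R : ℕ → ℕ → Prop) {n : ℕ} (π : Perm (Fin n)) : Prop :=
  ∀ a b c : Fin n, a < b → b < c → π b < π a → π c < π a → R (π b) (π c)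

/-- The entries of `π` at the (zero-based) positions `≥ t` are pairwise related by `R`; for the
orders `<` and `>` this says that they form a monotone sequence. -/
def PairwiseFrom (R : ℕ → ℕ → Prop) (t : ℕ) {n : ℕ} (π : Perm (Fin n)) : Prop :=
  ∀ a b : Fin n, t ≤ a → a < b → R (π a) (π b)

section Pairwise

variable {R : ℕ → ℕ → Prop} {n t : ℕ} {i : Fin (n + 1)} {p : Perm (Fin n)}

lemma pairwiseFrom_of_le (h : n ≤ t) : PairwiseFrom R t p :=
  fun a _ hta _ => absurd a.is_lt (by omega)

lemma pairwiseRightBelow_insertMax :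
    PairwiseRightBelow R (insertMax i p) ↔ PairwiseRightBelow R p ∧ PairwiseFrom R i p := by
  have not_max_lt (v : Fin n) : ¬ Fin.last n < v.castSucc := (Fin.le_last _).not_gt
  have val_le_iff (a : Fin n) : (i : ℕ) ≤ a ↔ i ≤ a.castSucc := Iff.rfl
  rw [and_comm]
  simp [PairwiseRightBelow, PairwiseFrom, i.forall_iff_succAbove, not_max_lt, val_le_iff,
    Fin.lt_succAbove_iff_le_castSucc]

lemma pairwiseFrom_insertMax_of_lt (hp : PairwiseFrom R i p) (hit : i < t) :
    PairwiseFrom R t (insertMax i p) := by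
  intro a b hta hab
  obtain ⟨a, rfl⟩ := Fin.exists_succAbove_eq (show a ≠ i by omega)
  obtain ⟨b, rfl⟩ := Fin.exists_succAbove_eq (show b ≠ i by omega)
  have hia : i ≤ a.castSucc := Fin.lt_succAbove_iff_le_castSucc _ _ |>.1 (by omega)
  simpa using hp a b hia (Fin.succAbove_lt_succAbove_iff.1 hab)

lemma pairwiseFrom_insertMax_iff_of_le (hti : t ≤ i) :
    PairwiseFrom R t (insertMax i p) ↔
      (∀ a : Fin n, t ≤ a → a.castSucc < i → R (p a) n) ∧
      (∀ a : Fin n, i ≤ a.castSucc → R n (p a)) ∧ PairwiseFrom R t p := by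
  have le_succAbove (a : Fin n) : t ≤ i.succAbove a ↔ t ≤ a := by
    obtain h | h := lt_or_ge a.castSucc i
    · simp [Fin.succAbove_of_castSucc_lt _ _ h]
    · have hia : (i : ℕ) ≤ a := h
      rw [Fin.succAbove_of_le_castSucc _ _ h, Fin.val_succ]
      omega
  simp [PairwiseFrom, i.forall_iff_succAbove, hti, le_succAbove, forall_and,
    Fin.lt_succAbove_iff_le_castSucc, Fin.succAbove_lt_iff_castSucc_lt]

lemma pairwiseFrom_gt_insertMax_iff (hp : PairwiseFrom (· > ·) i p) :
    PairwiseFrom (· > ·) t (insertMax i p) ↔ i ≤ t := by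
  obtain hit | hti := lt_or_ge (i : ℕ) t
  · exact iff_of_true (pairwiseFrom_insertMax_of_lt hp hit) hit.le
  rw [pairwiseFrom_insertMax_iff_of_le hti]
  constructor
  · rintro ⟨before, -, -⟩
    by_contra hlt
    have := before ⟨t, by omega⟩ le_rfl (not_le.1 hlt)
    omega
  · intro hit
    obtain rfl : t = i := le_antisymm hti hit
    exact ⟨fun a hia hai => absurd hai hia.not_gt, fun a _ => (p a).is_lt, hp⟩

lemma pairwiseFrom_lt_insertMax_iff (hp : PairwiseFrom (· < ·) i p) :
    PairwiseFrom (· < ·) t (insertMax i p) ↔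
      i < t ∨ i = Fin.last n ∧ PairwiseFrom (· < ·) t p := by
  obtain hit | hti := lt_or_ge (i : ℕ) t
  · exact iff_of_true (pairwiseFrom_insertMax_of_lt hp hit) (Or.inl hit)
  rw [pairwiseFrom_insertMax_iff_of_le hti, or_iff_right hti.not_gt]
  constructor
  · rintro ⟨-, after, suffix⟩
    refine ⟨?_, suffix⟩
    by_contra hi
    have := after (i.castPred hi) (by simp)
    omega
  · rintro ⟨rfl, suffix⟩
    exact ⟨fun a _ _ => (p a).is_lt, fun a ha => absurd (Fin.castSucc_lt_last a) ha.not_gt, suffix⟩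

end Pairwise

/-! ### The Catalan triangle -/

/-- The entries `F n t` with `t ≤ n` form the Catalan triangle, characterised by its first entry and
by each row being the partial sums of the row above. -/
structure IsCatalanTriangle (F : ℕ → ℕ → ℕ) : Prop where
  zero_zero : F 0 0 = 1
  succ_of_le : ∀ {n t}, t ≤ n → F (n + 1) t = ∑ i ∈ Finset.range (t + 1), F n i
  succ_self : ∀ n, F (n + 1) (n + 1) = ∑ i ∈ Finset.range (n + 1), F n i

namespace IsCatalanTriangle

variable {F : ℕ → ℕ → ℕ} (hF : IsCatalanTriangle F)
include hF

lemma apply_zero (n : ℕ) : F n 0 = 1 := by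
  induction n with
  | zero => exact hF.zero_zero
  | succ n ih => simp [hF.succ_of_le (Nat.zero_le n), ih]

lemma succ_succ {n t : ℕ} (h : t < n) : F (n + 1) (t + 1) = F (n + 1) t + F n (t + 1) := by
  rw [hF.succ_of_le h, hF.succ_of_le h.le, Finset.sum_range_succ]

lemma succ_self_eq (n : ℕ) : F (n + 1) (n + 1) = F (n + 1) n := by
  rw [hF.succ_self, hF.succ_of_le le_rfl]

lemma add_choose_eq {n t : ℕ} (h : t ≤ n) :
    F n t + (n + t).choose (n + 1) = (n + t).choose n := by
  induction n generalizing t with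
  | zero =>
    obtain rfl : t = 0 := by omega
    simp [hF.zero_zero]
  | succ n ihn =>
    induction t with
    | zero => simp [hF.apply_zero]
    | succ t iht =>
      have row := iht (by omega)
      have pascal := Nat.choose_succ_succ' (n + 1 + t) (n + 1)
      have pascal' := Nat.choose_succ_succ' (n + 1 + t) n
      rw [← add_assoc]
      obtain htn | rfl : t < n ∨ t = n := by omega
      · have above := ihn (t := t + 1) htn
        rw [show n + (t + 1) = n + 1 + t by ring] at above
        rw [hF.succ_succ htn]
        omega
      · have symm : (t + 1 + t).choose t = (t + 1 + t).choose (t + 1) :=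
          Nat.choose_symm_of_eq_add (by ring)
        rw [hF.succ_self_eq]
        omega

theorem self_eq_catalan (n : ℕ) : F n n = catalan n := by
  have ballot := hF.add_choose_eq (le_refl n)
  have central : (n + 1) * catalan n = (n + n).choose n := by
    rw [succ_mul_catalan_eq_centralBinom, Nat.centralBinom_eq_two_mul_choose, two_mul]
  have next : (n + n).choose (n + 1) * (n + 1) = (n + n).choose n * n := by
    rw [Nat.choose_succ_right_eq, Nat.add_sub_cancel]
  refine Nat.eq_of_mul_eq_mul_left n.succ_pos ?_
  rw [Nat.succ_eq_add_one, central]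
  linear_combination (n + 1) * ballot - next

end IsCatalanTriangle

/-! ### Counting avoiders by the length of a related suffix -/

lemma card_subtype_and_const {α : Type*} (P : α → Prop) (c : Prop) [Decidable c] :
    Nat.card {a // P a ∧ c} = if c then Nat.card {a // P a} else 0 := by
  split_ifs with hc <;> simp [hc]

lemma sum_fin_ite_lt {M : Type*} [AddCommMonoid M] (f : ℕ → M) {n t : ℕ} (h : t ≤ n) :
    ∑ i : Fin n, (if (i : ℕ) < t then f i else 0) = ∑ i ∈ Finset.range t, f i := by
  rw [Fin.sum_univ_eq_sum_range (fun i => if i < t then f i else 0), ← Finset.sum_filter]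
  congr 1
  ext i
  simp only [Finset.mem_filter, Finset.mem_range]
  omega

/-- The number of permutations `π` of `n` letters with `PairwiseRightBelow R π` whose entries from
position `t` on are pairwise related by `R`. -/
noncomputable def suffixCount (R : ℕ → ℕ → Prop) (n t : ℕ) : ℕ :=
  Nat.card {π : Perm (Fin n) // PairwiseRightBelow R π ∧ PairwiseFrom R t π}

section suffixCount

variable (R : ℕ → ℕ → Prop) (n : ℕ)

lemma suffixCount_self :
    suffixCount R n n = Nat.card {π : Perm (Fin n) // PairwiseRightBelow R π} := by
  simp [suffixCount, pairwiseFrom_of_le]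

lemma suffixCount_zero_zero : suffixCount R 0 0 = 1 := by
  simp [suffixCount_self, PairwiseRightBelow]

lemma suffixCount_succ_self :
    suffixCount R (n + 1) (n + 1) = ∑ i ∈ Finset.range (n + 1), suffixCount R n i := by
  rw [suffixCount_self, card_subtype_perm_succ, ← Fin.sum_univ_eq_sum_range]
  simp only [pairwiseRightBelow_insertMax, suffixCount]

lemma suffixCount_succ (t : ℕ) :
    suffixCount R (n + 1) t = ∑ i : Fin (n + 1), Nat.card {p : Perm (Fin n) //
      (PairwiseRightBelow R p ∧ PairwiseFrom R i p) ∧ PairwiseFrom R t (insertMax i p)} := by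
  rw [suffixCount, card_subtype_perm_succ]
  simp only [pairwiseRightBelow_insertMax]

end suffixCount

theorem isCatalanTriangle_suffixCount_gt : IsCatalanTriangle (suffixCount (· > ·)) where
  zero_zero := suffixCount_zero_zero _
  succ_self := suffixCount_succ_self _
  succ_of_le {n t} htn := by
    have extend (i : Fin (n + 1)) (p : Perm (Fin n)) :
        (PairwiseRightBelow (· > ·) p ∧ PairwiseFrom (· > ·) i p) ∧
            PairwiseFrom (· > ·) t (insertMax i p) ↔
          (PairwiseRightBelow (· > ·) p ∧ PairwiseFrom (· > ·) i p) ∧ (i : ℕ) < t + 1 := by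
      rw [Nat.lt_succ_iff]
      exact and_congr_right fun h => pairwiseFrom_gt_insertMax_iff h.2
    simp only [suffixCount_succ, extend, card_subtype_and_const]
    exact sum_fin_ite_lt (suffixCount (· > ·) n) (by omega)

/-- A maximum inserted at a position `≥ t` lies in the increasing suffix, hence at its end. -/
lemma card_insertMax_pairwiseFrom_lt {n t : ℕ} (htn : t ≤ n) (i : Fin (n + 1)) :
    Nat.card {p : Perm (Fin n) // (PairwiseRightBelow (· < ·) p ∧ PairwiseFrom (· < ·) i p) ∧
        PairwiseFrom (· < ·) t (insertMax i p)} =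
      (if (i : ℕ) < t then suffixCount (· < ·) n i else 0) +
        if i = Fin.last n then suffixCount (· < ·) n t else 0 := by
  obtain hit | hti := lt_or_ge (i : ℕ) t
  · have hi : i ≠ Fin.last n := by
      rintro rfl
      exact lt_irrefl n (hit.trans_le htn)
    rw [if_pos hit, if_neg hi, add_zero, suffixCount]
    congr! 3 with p
    exact and_iff_left_of_imp fun h => pairwiseFrom_insertMax_of_lt h.2 hit
  · rw [if_neg hti.not_gt, zero_add, suffixCount, ← card_subtype_and_const]
    congr! 3 with p
    constructor
    · rintro ⟨⟨hp, hi⟩, ht⟩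
      obtain ⟨hlast, hp'⟩ := ((pairwiseFrom_lt_insertMax_iff hi).1 ht).resolve_left hti.not_gt
      exact ⟨⟨hp, hp'⟩, hlast⟩
    · rintro ⟨⟨hp, ht⟩, rfl⟩
      have hi : PairwiseFrom (· < ·) (Fin.last n) p := pairwiseFrom_of_le le_rfl
      exact ⟨⟨hp, hi⟩, (pairwiseFrom_lt_insertMax_iff hi).2 (Or.inr ⟨rfl, ht⟩)⟩

theorem isCatalanTriangle_suffixCount_lt : IsCatalanTriangle (suffixCount (· < ·)) where
  zero_zero := suffixCount_zero_zero _
  succ_self := suffixCount_succ_self _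
  succ_of_le {n t} htn := by
    simp only [suffixCount_succ, card_insertMax_pairwiseFrom_lt htn, Finset.sum_add_distrib]
    rw [sum_fin_ite_lt (suffixCount (· < ·) n) (by omega), Finset.sum_range_succ]
    simp

/-! ### The order of the two largest values -/

lemma card_last_before_castSucc_last {n : ℕ} (P : Perm (Fin (n + 2)) → Prop) :
    Nat.card {π : Perm (Fin (n + 2)) //
        P π ∧ π⁻¹ (Fin.last (n + 1)) < π⁻¹ (Fin.last n).castSucc} =
      ∑ i : Fin (n + 2), ∑ j : Fin (n + 1),
        Nat.card {q : Perm (Fin n) // P (insertMax i (insertMax j q)) ∧ i ≤ j.castSucc} := by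
  rw [card_subtype_perm_succ]
  simp [card_subtype_perm_succ (n := n), Fin.lt_succAbove_iff_le_castSucc]

theorem card_gt_last_before_castSucc_last (n : ℕ) :
    Nat.card {π : Perm (Fin (n + 2)) // PairwiseRightBelow (· > ·) π ∧
        π⁻¹ (Fin.last (n + 1)) < π⁻¹ (Fin.last n).castSucc} =
      suffixCount (· > ·) (n + 1) (n + 1) := by
  have adjacent (i : Fin (n + 2)) (j : Fin (n + 1)) (q : Perm (Fin n)) :
      PairwiseRightBelow (· > ·) (insertMax i (insertMax j q)) ∧ i ≤ j.castSucc ↔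
        (PairwiseRightBelow (· > ·) q ∧ PairwiseFrom (· > ·) j q) ∧ i = j.castSucc := by
    rw [pairwiseRightBelow_insertMax, pairwiseRightBelow_insertMax, and_assoc]
    refine and_congr_right fun h => ?_
    rw [pairwiseFrom_gt_insertMax_iff h.2, le_antisymm_iff, and_comm]
    rfl
  rw [card_last_before_castSucc_last, Finset.sum_comm, suffixCount_succ_self,
    ← Fin.sum_univ_eq_sum_range]
  simp [adjacent, card_subtype_and_const, suffixCount]

theorem card_lt_last_before_castSucc_last (n : ℕ) :
    Nat.card {π : Perm (Fin (n + 2)) // PairwiseRightBelow (· < ·) π ∧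
        π⁻¹ (Fin.last (n + 1)) < π⁻¹ (Fin.last n).castSucc} =
      suffixCount (· < ·) (n + 1) (n + 1) := by
  have smaller_at_end (i : Fin (n + 2)) (j : Fin (n + 1)) (q : Perm (Fin n)) :
      PairwiseRightBelow (· < ·) (insertMax i (insertMax j q)) ∧ i ≤ j.castSucc ↔
        ((PairwiseRightBelow (· < ·) q ∧ PairwiseFrom (· < ·) i q) ∧ i ≠ Fin.last (n + 1)) ∧
          j = Fin.last n := by
    rw [pairwiseRightBelow_insertMax, pairwiseRightBelow_insertMax]
    constructor
    · rintro ⟨⟨⟨hq, hj⟩, hi⟩, hij⟩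
      obtain ⟨rfl, hi'⟩ := ((pairwiseFrom_lt_insertMax_iff hj).1 hi).resolve_left hij.not_gt
      exact ⟨⟨⟨hq, hi'⟩, (hij.trans_lt (Fin.castSucc_lt_last _)).ne⟩, rfl⟩
    · rintro ⟨⟨⟨hq, hi⟩, hne⟩, rfl⟩
      have hj : PairwiseFrom (· < ·) (Fin.last n) q := pairwiseFrom_of_le le_rfl
      refine ⟨⟨⟨hq, hj⟩, (pairwiseFrom_lt_insertMax_iff hj).2 (Or.inr ⟨rfl, hi⟩)⟩, ?_⟩
      exact Nat.le_of_lt_succ (Fin.val_lt_last hne)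
  rw [card_last_before_castSucc_last, suffixCount_succ_self, ← Fin.sum_univ_eq_sum_range,
    Fin.sum_univ_castSucc]
  simp_rw [smaller_at_end]
  simp [card_subtype_and_const, suffixCount, Fin.castSucc_ne_last]

/-! ### Pattern containment -/

lemma lt_iff_not_gt_of_injective {α β : Type*} [LinearOrder β] {f : α → β}
    (hf : Function.Injective f) {a b : α} (hab : a ≠ b) : f a < f b ↔ ¬ f b < f a :=
  (not_lt.trans (hf.ne hab).le_iff_lt).symm

lemma containsPat_iff_forall_of_lt {n k : ℕ} (π : Perm (Fin n)) (τ : Perm (Fin k)) :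
    ContainsPat π τ ↔ ∃ f : Fin k → Fin n, StrictMono f ∧
      ∀ s t, s < t → (τ t < τ s ↔ π (f t) < π (f s)) := by
  refine exists_congr fun f => and_congr_right fun hf =>
    ⟨fun h s t _ => h t s, fun h s t => ?_⟩
  obtain hst | rfl | hts := lt_trichotomy s t
  · rw [lt_iff_not_gt_of_injective τ.injective hst.ne, h s t hst,
      ← lt_iff_not_gt_of_injective π.injective (hf hst).ne]
  · simp
  · exact h t s hts

lemma containsPat_iff_exists_three {n : ℕ} (π : Perm (Fin n)) (τ : Perm (Fin 3)) :
    ContainsPat π τ ↔ ∃ a b c, a < b ∧ b < c ∧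
      (τ 1 < τ 0 ↔ π b < π a) ∧ (τ 2 < τ 0 ↔ π c < π a) ∧ (τ 2 < τ 1 ↔ π c < π b) := by
  rw [containsPat_iff_forall_of_lt]
  constructor
  · rintro ⟨f, hf, h⟩
    exact ⟨f 0, f 1, f 2, hf (by decide), hf (by decide), h 0 1 (by decide), h 0 2 (by decide),
      h 1 2 (by decide)⟩
  · rintro ⟨a, b, c, hab, hbc, h01, h02, h12⟩
    refine ⟨![a, b, c], ?_, ?_⟩
    · simp [Fin.strictMono_iff_lt_succ, Fin.forall_fin_succ, hab, hbc]
    · simp [Fin.forall_fin_succ, h01, h02, h12]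

lemma not_containsPat_p312_iff {n : ℕ} (π : Perm (Fin n)) :
    ¬ ContainsPat π p312 ↔ PairwiseRightBelow (· > ·) π := by
  simp [-exists_and_left, containsPat_iff_exists_three, p312, PairwiseRightBelow]

lemma not_containsPat_p321_iff {n : ℕ} (π : Perm (Fin n)) :
    ¬ ContainsPat π p321 ↔ PairwiseRightBelow (· < ·) π := by
  have le_iff_lt {b c : Fin n} (hbc : b < c) : π b ≤ π c ↔ π b < π c :=
    (π.injective.ne hbc.ne).le_iff_lt
  simp +contextual [-exists_and_left, containsPat_iff_exists_three, p321, PairwiseRightBelow,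
    le_iff_lt]

lemma forall_last_two_iff {n : ℕ} (P : Fin (n + 2) → Fin (n + 2) → Prop) :
    (∀ u v : Fin (n + 2), (u : ℕ) + 1 = n + 2 → (v : ℕ) + 2 = n + 2 → P u v) ↔
      P (Fin.last (n + 1)) (Fin.last n).castSucc := by
  refine ⟨fun h => h _ _ rfl rfl, fun h u v hu hv => ?_⟩
  obtain rfl : u = Fin.last (n + 1) := Fin.ext (by simpa using hu)
  obtain rfl : v = (Fin.last n).castSucc := Fin.ext (by simpa using hv)
  exact h

lemma card_subtype_and_not {α : Type*} [Finite α] (P Q : α → Prop) :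
    Nat.card {a // P a ∧ ¬ Q a} = Nat.card {a // P a} - Nat.card {a // P a ∧ Q a} :=
  (Nat.sub_eq_of_eq_add' (Set.ncard_inter_add_ncard_sdiff_eq_ncard {a | P a} {a | Q a}).symm).symm

theorem stmt9 (m : ℕ) (hm : 2 ≤ m) (σ : Equiv.Perm (Fin 3)) (hσ : σ = p312 ∨ σ = p321) :
    Nat.card {π : Equiv.Perm (Fin m) // ¬ ContainsPat π σ ∧
        ∀ u v : Fin m, (u : ℕ) + 1 = m → (v : ℕ) + 2 = m → π⁻¹ u < π⁻¹ v} =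
      catalan (m - 1) ∧
    Nat.card {π : Equiv.Perm (Fin m) // ¬ ContainsPat π σ ∧
        ∀ u v : Fin m, (u : ℕ) + 1 = m → (v : ℕ) + 2 = m → π⁻¹ v < π⁻¹ u} =
      catalan m - catalan (m - 1) := by
  obtain ⟨n, rfl⟩ := Nat.exists_eq_add_of_le' hm
  obtain ⟨R, avoids_iff, triangle, desc⟩ : ∃ R : ℕ → ℕ → Prop,
      (∀ π : Perm (Fin (n + 2)), ¬ ContainsPat π σ ↔ PairwiseRightBelow R π) ∧
      IsCatalanTriangle (suffixCount R) ∧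
      Nat.card {π : Perm (Fin (n + 2)) // PairwiseRightBelow R π ∧
        π⁻¹ (Fin.last (n + 1)) < π⁻¹ (Fin.last n).castSucc} = suffixCount R (n + 1) (n + 1) := by
    obtain rfl | rfl := hσ
    · exact ⟨_, not_containsPat_p312_iff, isCatalanTriangle_suffixCount_gt,
        card_gt_last_before_castSucc_last n⟩
    · exact ⟨_, not_containsPat_p321_iff, isCatalanTriangle_suffixCount_lt,
        card_lt_last_before_castSucc_last n⟩
  have asc_iff (π : Perm (Fin (n + 2))) : π⁻¹ (Fin.last n).castSucc < π⁻¹ (Fin.last (n + 1)) ↔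
      ¬ π⁻¹ (Fin.last (n + 1)) < π⁻¹ (Fin.last n).castSucc :=
    lt_iff_not_gt_of_injective π⁻¹.injective (Fin.castSucc_ne_last _)
  simp only [avoids_iff, forall_last_two_iff, asc_iff, card_subtype_and_not, desc,
    ← suffixCount_self, triangle.self_eq_catalan]
  exact ⟨rfl, rfl⟩
end

section
/- Let Y be a Young diagram of size n ≥ 2 given by b such that every critical point of Y is 2-critical, i.e. for all 1 ≤ y ≤ n−1, b(y+1) > b(y) implies b(y) = y + 2. Then |S_{↘Y}(321)| = |S_{↘Y}(312)|, |S_{↗Y}(321)| = |S_{↗Y}(312)|, and |S_Y(321)| = |S_Y(312)|. -/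
/-!
Deleting the bottom dot of a transversal leaves a transversal of the diagram without its bottom row.
Conversely, since the bottom row is the shortest, whether inserting a bottom dot in column `t`
creates an occurrence of the pattern is decided by the columns meeting the bottom row. For `321` the
dots to the left of `t` must increase; for `312` the dots to the left of `t` must lie below the dots
to the right of `t` in those columns. For either pattern, as long as `b(y) - y` is constant, a
transversal with `s` admissible columns has children with `2, …, s + 1` admissible columns, so that
the distributions of `s` remain equal.

To cross a critical point one also has to keep track of the first two dots. For `321` they ascend
exactly when `s > 2`. For `312` there is a second identity: for every `u ≥ 2`, the avoiders with
`s = u` that begin with an ascent but do not admit a dot between the first two dots are as many as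
the avoiders with `s > u` that begin with a descent. It is inherited under insertion of a dot, and
with the first identity it shows that equally many avoiders of either pattern begin with an ascent.
Just below a `2`-critical point only the first two dots lie in the columns that matter, and `s` is
`3` or `2` according to whether they ascend; hence both identities hold again.
-/

open Equiv

open Finset

/-- The permutation obtained from `π` by inserting a new smallest value, the dot in the bottom row,
at column `t`. -/
def insertBottom {n : ℕ} (t : Fin (n + 1)) (π : Perm (Fin n)) : Perm (Fin (n + 1)) :=
  ((finSuccEquiv' t).trans (optionCongr π)).trans (finSuccEquiv' 0).symm

/-- The row lengths of the Young diagram `b` after deletion of its bottom row and of one column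
meeting that row; the columns meeting the bottom row meet every row. -/
def removeBottom {n : ℕ} (b : Fin (n + 1) → ℕ) (y : Fin n) : ℕ := b y.succ - 1

open scoped Classical in
/-- The finite set `S_Y(τ)` of transversals of the Young diagram `b` avoiding `τ` in it. -/
noncomputable def avoiders {n k : ℕ} (b : Fin n → ℕ) (τ : Perm (Fin k)) : Finset (Perm (Fin n)) :=
  {π | IsTransversal b π ∧ ¬ ContainsIn b π τ}

/-- The dot inserted at column `t` by `insertBottom` is the lowest dot, at position `p`, of an
occurrence of `τ` whose other dots `g` are dots of `π`; all columns of the occurrence are among the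
first `L + 1`. -/
def CompletesPattern {n k : ℕ} (L : ℕ) (π : Perm (Fin n)) (τ : Perm (Fin (k + 1)))
    (p : Fin (k + 1)) (t : Fin (n + 1)) : Prop :=
  ∃ g : Fin k → Fin n, StrictMono g ∧
    (∀ r s, τ (p.succAbove r) < τ (p.succAbove s) ↔ π (g r) < π (g s)) ∧
    (∀ s, s.castSucc < p ↔ (g s).castSucc < t) ∧ ∀ s, (g s : ℕ) < L

section InsertBottom

variable {n : ℕ} (t : Fin (n + 1)) (π : Perm (Fin n))

@[simp]
lemma insertBottom_self : insertBottom t π t = 0 := by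
  simp [insertBottom]

@[simp]
lemma insertBottom_succAbove (i : Fin n) : insertBottom t π (t.succAbove i) = (π i).succ := by
  simp [insertBottom]

lemma insertBottom_zero_succ (i : Fin n) : insertBottom 0 π i.succ = (π i).succ := by
  simpa using insertBottom_succAbove 0 π i

lemma insertBottom_bijective (n : ℕ) :
    Function.Bijective fun q : Fin (n + 1) × Perm (Fin n) ↦ insertBottom q.1 q.2 := by
  refine (Fintype.bijective_iff_injective_and_card _).2 ⟨?_, ?_⟩
  · rintro ⟨t, π⟩ ⟨t', π'⟩ (h : insertBottom t π = insertBottom t' π')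
    obtain rfl : t = t' :=
      (insertBottom t' π').injective (by rw [insertBottom_self, ← h, insertBottom_self])
    congr 1
    ext1 i
    simpa using DFunLike.congr_fun h (t.succAbove i)
  · simp [Fintype.card_perm, Nat.factorial_succ]

lemma val_succAbove_lt_iff {t : Fin (n + 1)} {c : ℕ} (h : t < c) (i : Fin n) :
    t.succAbove i < c ↔ i + 1 < c := by
  grind [Fin.succAbove]

end InsertBottom

section RemoveBottom

variable {n : ℕ} {b : Fin (n + 1) → ℕ}

lemma add_one_le_removeBottom_iff (hb : Monotone b) {t : Fin (n + 1)} (ht : t < b 0)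
    (i y : Fin n) : i + 1 ≤ removeBottom b y ↔ t.succAbove i + 1 ≤ b y.succ := by
  have hy : t < b y.succ := ht.trans_le (hb (Fin.zero_le _))
  have := val_succAbove_lt_iff hy i
  rw [removeBottom]
  omega

lemma isTransversal_insertBottom_iff (hb : Monotone b) (t : Fin (n + 1)) (π : Perm (Fin n)) :
    IsTransversal b (insertBottom t π) ↔ t < b 0 ∧ IsTransversal (removeBottom b) π := by
  rw [IsTransversal, Fin.forall_iff_succAbove t, insertBottom_self]
  refine and_congr_right fun ht ↦ forall_congr' fun i ↦ ?_
  rw [insertBottom_succAbove, add_one_le_removeBottom_iff hb ht]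

variable {k : ℕ} {t : Fin (n + 1)} {π : Perm (Fin n)}

lemma ContainsIn.insertBottom {τ : Perm (Fin k)} (hb : Monotone b) (ht : t < b 0)
    (h : ContainsIn (removeBottom b) π τ) : ContainsIn b (insertBottom t π) τ := by
  obtain ⟨g, hg, hord, hin⟩ := h
  refine ⟨t.succAbove ∘ g, (Fin.strictMono_succAbove t).comp hg, fun r s ↦ ?_, fun r s ↦ ?_⟩
  · simp [hord]
  · simpa [← add_one_le_removeBottom_iff hb ht] using hin r s

variable {τ : Perm (Fin (k + 1))} {p : Fin (k + 1)}

lemma CompletesPattern.containsIn_insertBottom {L : ℕ} (hb : Monotone b) (hL : b 0 = L + 1)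
    (ht : t ≤ L) (hp : τ p = 0) (h : CompletesPattern L π τ p t) :
    ContainsIn b (insertBottom t π) τ := by
  obtain ⟨g, hg, hord, hpos, hin⟩ := h
  have hτ (s : Fin k) : τ (p.succAbove s) ≠ 0 := hp ▸ τ.injective.ne (p.succAbove_ne s)
  have hcol (s : Fin (k + 1)) :
      (p.insertNth t (t.succAbove ∘ g) : Fin (k + 1) → Fin (n + 1)) s < b 0 := by
    rcases Fin.eq_self_or_eq_succAbove p s with rfl | ⟨s, rfl⟩
    · rw [Fin.insertNth_apply_same, hL]
      exact Nat.lt_succ_of_le ht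
    · simpa [hL, val_succAbove_lt_iff (Nat.lt_succ_of_le ht)] using hin s
  refine ⟨_, (Fin.strictMono_insertNth_iff _ _ _).2
    ⟨(Fin.strictMono_succAbove t).comp hg, fun s hs ↦ ?_, fun s hs ↦ ?_⟩, ?_,
    fun r s ↦ (hcol r).trans_le (hb (Fin.zero_le _))⟩
  · rwa [Function.comp_apply, Fin.succAbove_lt_iff_castSucc_lt, ← hpos]
  · rwa [Function.comp_apply, Fin.lt_succAbove_iff_le_castSucc, ← not_lt, ← hpos, not_lt]
  · simp [Fin.forall_iff_succAbove p, hord, hp, Fin.pos_iff_ne_zero, hτ]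

lemma containsIn_insertBottom_iff {L : ℕ} (hb : Monotone b) (hL : b 0 = L + 1)
    (ht : t ≤ L) (hp : τ p = 0) :
    ContainsIn b (insertBottom t π) τ ↔
      ContainsIn (removeBottom b) π τ ∨ CompletesPattern L π τ p t := by
  refine ⟨?_, Or.rec (ContainsIn.insertBottom hb (by omega))
    (CompletesPattern.containsIn_insertBottom hb hL ht hp)⟩
  rintro ⟨f, hf, hord, hin⟩
  by_cases htf : ∃ s, f s = t
  · right
    obtain ⟨s, hs⟩ := htf
    obtain rfl : s = p := by
      by_contra hsp
      have := (hord p s).1 (by rw [hp, Fin.pos_iff_ne_zero, ← hp]; exact τ.injective.ne hsp)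
      simp [hs] at this
    have hne (r : Fin k) : ∃ j, t.succAbove j = f (s.succAbove r) :=
      Fin.exists_succAbove_eq (hs ▸ hf.injective.ne (s.succAbove_ne r))
    choose g hg using hne
    refine ⟨g, fun q r hqr ↦ ?_, fun q r ↦ ?_, fun r ↦ ?_, fun r ↦ ?_⟩
    · rw [← Fin.succAbove_lt_succAbove_iff (p := t), hg, hg]
      exact hf (Fin.succAbove_lt_succAbove_iff.2 hqr)
    · rw [hord, ← hg, ← hg]
      simp
    · rw [← Fin.succAbove_lt_iff_castSucc_lt, ← hf.lt_iff_lt, hs, ← hg,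
        Fin.succAbove_lt_iff_castSucc_lt]
    · have := hin (s.succAbove r) s
      rw [hs, insertBottom_self, ← hg, hL, Nat.succ_le_iff, val_succAbove_lt_iff (by omega)] at this
      omega
  · left
    push Not at htf
    choose g hg using fun s ↦ Fin.exists_succAbove_eq (htf s)
    obtain rfl : t.succAbove ∘ g = f := funext hg
    refine ⟨g, fun r s hrs ↦ ?_, fun r s ↦ ?_, fun r s ↦ ?_⟩
    · exact Fin.succAbove_lt_succAbove_iff.1 (hf hrs)
    · simp [hord]
    · rw [add_one_le_removeBottom_iff hb (t := t) (by omega)]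
      simpa using hin r s

end RemoveBottom

/-- The columns `t ≤ L` at which a bottom dot can be inserted into `π` without completing a `321`:
the dots of `π` to the left of `t` increase. -/
def ascSites {n : ℕ} (L : Fin (n + 1)) (π : Perm (Fin n)) : Finset (Fin (n + 1)) :=
  {t | t ≤ L ∧ ∀ i j : Fin n, i < j → j.castSucc < t → π i < π j}

/-- The columns `t ≤ L` at which a bottom dot can be inserted into `π` without completing a `312` in
the first `L + 1` columns: the dots to the left of `t` lie below those to the right of `t` and
in the first `L` columns. -/
def sepSites {n : ℕ} (L : Fin (n + 1)) (π : Perm (Fin n)) : Finset (Fin (n + 1)) :=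
  {t | t ≤ L ∧ ∀ i j : Fin n, i.castSucc < t → t ≤ j.castSucc → j.castSucc < L → π i < π j}

section Sites

variable {n : ℕ} {L t : Fin (n + 1)} {π : Perm (Fin n)}

lemma mem_ascSites :
    t ∈ ascSites L π ↔ t ≤ L ∧ ∀ i j : Fin n, i < j → j.castSucc < t → π i < π j := by
  simp [ascSites]

lemma mem_sepSites :
    t ∈ sepSites L π ↔ t ≤ L ∧
      ∀ i j : Fin n, i.castSucc < t → t ≤ j.castSucc → j.castSucc < L → π i < π j := by
  simp [sepSites]

lemma mem_ascSites_iff_not_completesPattern :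
    t ∈ ascSites L π ↔ t ≤ L ∧ ¬ CompletesPattern L π p321 2 t := by
  rw [mem_ascSites, CompletesPattern]
  refine and_congr_right fun ht ↦ ?_
  constructor
  · rintro h ⟨g, hg, hord, hpos, -⟩
    exact (h _ _ (hg Fin.zero_lt_one) ((hpos 1).1 (by decide))).asymm ((hord 1 0).1 (by decide))
  · intro h i j hij hj
    by_contra! hlt
    have hlt : π j < π i := hlt.lt_of_ne (π.injective.ne hij.ne')
    have hi := (Fin.castSucc_lt_castSucc_iff.2 hij).trans hj
    refine h ⟨![i, j], by simp [hij], ?_, ?_, ?_⟩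
    · simp [Fin.forall_fin_two, Fin.succAbove, p321, hlt, hlt.le]
    · simp [Fin.forall_fin_two, hi, hj]
    · exact Fin.forall_fin_two.2 ⟨hi.trans_le ht, hj.trans_le ht⟩

lemma mem_sepSites_iff_not_completesPattern :
    t ∈ sepSites L π ↔ t ≤ L ∧ ¬ CompletesPattern L π p312 1 t := by
  rw [mem_sepSites, CompletesPattern]
  refine and_congr_right fun ht ↦ ?_
  constructor
  · rintro h ⟨g, -, hord, hpos, hin⟩
    exact (h _ _ ((hpos 0).1 (by decide)) (not_lt.1 ((hpos 1).not.1 (by decide))) (hin 1)).asymm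
      ((hord 1 0).1 (by decide))
  · intro h i j hi hj hjL
    by_contra! hlt
    have hij := Fin.castSucc_lt_castSucc_iff.1 (hi.trans_le hj)
    have hlt : π j < π i := hlt.lt_of_ne (π.injective.ne hij.ne')
    refine h ⟨![i, j], by simp [hij], ?_, ?_, ?_⟩
    · simp [Fin.forall_fin_two, Fin.succAbove, p312, hlt, hlt.le]
    · simp [Fin.forall_fin_two, hi, hj]
    · exact Fin.forall_fin_two.2 ⟨hi.trans_le ht, hjL⟩

end Sites

section Avoiders

variable {n k : ℕ}

lemma mem_avoiders {b : Fin n → ℕ} {τ : Perm (Fin k)} {π : Perm (Fin n)} :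
    π ∈ avoiders b τ ↔ IsTransversal b π ∧ ¬ ContainsIn b π τ := by
  simp [avoiders]

lemma sum_avoiders_eq_sum_removeBottom {M : Type*} [AddCommMonoid M] {b : Fin (n + 1) → ℕ}
    (hb : Monotone b) {L : Fin (n + 1)} (hL : b 0 = L + 1) {τ : Perm (Fin (k + 1))}
    {p : Fin (k + 1)} (hp : τ p = 0) {sites : Perm (Fin n) → Finset (Fin (n + 1))}
    (hsites : ∀ t π, t ∈ sites π ↔ t ≤ L ∧ ¬ CompletesPattern L π τ p t)
    (F : Perm (Fin (n + 1)) → M) :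
    ∑ π ∈ avoiders b τ, F π =
      ∑ π ∈ avoiders (removeBottom b) τ, ∑ t ∈ sites π, F (insertBottom t π) := by
  classical
  have hmem (t π) : insertBottom t π ∈ avoiders b τ ↔
      π ∈ avoiders (removeBottom b) τ ∧ t ∈ sites π := by
    rw [mem_avoiders, mem_avoiders, isTransversal_insertBottom_iff hb, hsites, hL,
      Nat.lt_succ_iff, Fin.val_fin_le]
    by_cases ht : t ≤ L
    · rw [containsIn_insertBottom_iff hb hL ht hp]
      tauto
    · tauto
  rw [← Fintype.sum_ite_mem, ← (insertBottom_bijective n).sum_comp, Fintype.sum_prod_type_right,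
    ← Fintype.sum_ite_mem (avoiders (removeBottom b) τ)]
  refine sum_congr rfl fun π _ ↦ ?_
  simp only [hmem, ite_and, ← Fintype.sum_ite_mem (sites π)]
  split_ifs <;> simp

lemma sum_avoiders_321 {M : Type*} [AddCommMonoid M] {b : Fin (n + 1) → ℕ}
    (hb : Monotone b) {L : Fin (n + 1)} (hL : b 0 = L + 1) (F : Perm (Fin (n + 1)) → M) :
    ∑ π ∈ avoiders b p321, F π =
      ∑ π ∈ avoiders (removeBottom b) p321, ∑ t ∈ ascSites L π, F (insertBottom t π) :=
  sum_avoiders_eq_sum_removeBottom hb hL (p := 2) rfl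
    (fun _ _ ↦ mem_ascSites_iff_not_completesPattern) F

lemma sum_avoiders_312 {M : Type*} [AddCommMonoid M] {b : Fin (n + 1) → ℕ}
    (hb : Monotone b) {L : Fin (n + 1)} (hL : b 0 = L + 1) (F : Perm (Fin (n + 1)) → M) :
    ∑ π ∈ avoiders b p312, F π =
      ∑ π ∈ avoiders (removeBottom b) p312, ∑ t ∈ sepSites L π, F (insertBottom t π) :=
  sum_avoiders_eq_sum_removeBottom hb hL (p := 1) rfl
    (fun _ _ ↦ mem_sepSites_iff_not_completesPattern) F

end Avoiders

section Reindexing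

variable {M : Type*} [AddCommMonoid M]

lemma sum_comp_eq_sum_of_injOn {α β : Type*} {s : Finset α} {t : Finset β} {g : α → β}
    (hmaps : Set.MapsTo g s t) (hinj : Set.InjOn g s) (hcard : #t ≤ #s) (φ : β → M) :
    ∑ x ∈ s, φ (g x) = ∑ y ∈ t, φ y :=
  sum_nbij g hmaps hinj (surjOn_of_injOn_of_card_le g hmaps hinj hcard) fun _ _ ↦ rfl

lemma sum_card_filter_le_add_one {α : Type*} [LinearOrder α] (s : Finset α) (φ : ℕ → M) :
    ∑ t ∈ s, φ (#{u ∈ s | t ≤ u} + 1) = ∑ m ∈ Ico 2 (#s + 2), φ m := by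
  refine sum_comp_eq_sum_of_injOn (fun t ht ↦ ?_) ?_ (by simp) φ
  · have h₁ : 0 < #{u ∈ s | t ≤ u} := card_pos.2 ⟨t, by simpa using ht⟩
    have h₂ : #{u ∈ s | t ≤ u} ≤ #s := card_filter_le _ _
    rw [coe_Ico, Set.mem_Ico]
    omega
  · have hanti : StrictAntiOn (fun t ↦ #{u ∈ s | t ≤ u} + 1) s := by
      intro t ht t' _ htt'
      refine Nat.succ_lt_succ (card_lt_card (ssubset_iff_of_subset ?_ |>.2 ⟨t, ?_, ?_⟩))
      · exact monotone_filter_right _ fun u _ hu ↦ htt'.le.trans hu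
      · simpa using ht
      · simpa using fun _ ↦ htt'
    exact hanti.injOn

lemma card_eq_card_add_one_of_zero_mem {n : ℕ} {s : Finset (Fin (n + 1))} {s' : Finset (Fin n)}
    (h0 : 0 ∈ s) (hsucc : ∀ u, u.succ ∈ s ↔ u ∈ s') : #s = #s' + 1 := by
  classical
  have := Fin.card_filter_univ_succ (· ∈ s)
  simpa [h0, hsucc] using this

end Reindexing

section SitesInsertBottom

variable {n : ℕ} {L t : Fin (n + 1)} {π : Perm (Fin n)}

lemma zero_mem_ascSites : 0 ∈ ascSites L π := by
  simp [mem_ascSites]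

lemma succ_mem_ascSites_insertBottom_zero_iff (u : Fin (n + 1)) :
    u.succ ∈ ascSites L.succ (insertBottom 0 π) ↔ u ∈ ascSites L π := by
  simp [mem_ascSites, insertBottom_zero_succ, Fin.forall_fin_succ, Fin.castSucc_lt_iff_succ_le]

lemma card_ascSites_insertBottom_zero (L : Fin (n + 1)) (π : Perm (Fin n)) :
    #(ascSites L.succ (insertBottom 0 π)) = #(ascSites L π) + 1 :=
  card_eq_card_add_one_of_zero_mem zero_mem_ascSites succ_mem_ascSites_insertBottom_zero_iff

lemma ascSites_insertBottom_of_ne_zero (ht : t ∈ ascSites L π) (ht0 : t ≠ 0) :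
    ascSites L.succ (insertBottom t π) = Iic t.castSucc := by
  rw [mem_ascSites] at ht
  ext u
  rw [mem_ascSites, mem_Iic]
  constructor
  · rintro ⟨-, h⟩
    by_contra! hu
    simpa using h 0 t (Fin.pos_of_ne_zero ht0) hu
  · intro hu
    refine ⟨by grind, ?_⟩
    intro i j hij hj
    have hjt := Fin.castSucc_lt_castSucc_iff.1 (hj.trans_le hu)
    obtain ⟨i, rfl⟩ := Fin.exists_succAbove_eq (hij.trans hjt).ne
    obtain ⟨j, rfl⟩ := Fin.exists_succAbove_eq hjt.ne
    simpa using ht.2 i j (by simpa using hij) ((Fin.succAbove_lt_iff_castSucc_lt _ _).1 hjt)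

lemma val_lt_card_ascSites (ht : t ∈ ascSites L π) : t < #(ascSites L π) := by
  have hsub : Iic t ⊆ ascSites L π := by
    intro u hu
    rw [mem_Iic] at hu
    rw [mem_ascSites] at ht ⊢
    exact ⟨hu.trans ht.1, fun i j hij hj ↦ ht.2 i j hij (hj.trans_le hu)⟩
  simpa using card_le_card hsub

lemma card_ascSites_insertBottom (ht : t ∈ ascSites L π) :
    #(ascSites L.succ (insertBottom t π)) = if t = 0 then #(ascSites L π) + 1 else t + 1 := by
  split_ifs with ht0
  · rw [ht0, card_ascSites_insertBottom_zero]
  · simp [ascSites_insertBottom_of_ne_zero ht ht0]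

lemma zero_mem_sepSites : 0 ∈ sepSites L π := by
  simp [mem_sepSites]

lemma self_mem_sepSites : L ∈ sepSites L π := by
  rw [mem_sepSites]
  exact ⟨le_rfl, fun _ _ _ hj hj' ↦ absurd hj hj'.not_ge⟩

lemma succ_mem_sepSites_insertBottom_iff (ht : t ≤ L) {u : Fin (n + 1)} :
    u.succ ∈ sepSites L.succ (insertBottom t π) ↔ u ∈ sepSites L π ∧ t ≤ u := by
  rw [mem_sepSites, mem_sepSites]
  constructor
  · rintro ⟨hu, h⟩
    have htu : t ≤ u := by
      by_contra! hut
      simpa using h 0 t (by simp) (by grind) (by grind)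
    refine ⟨⟨by simpa using hu, fun i j hi hj hjL ↦ ?_⟩, htu⟩
    simpa using h (t.succAbove i) (t.succAbove j) (by grind [Fin.succAbove])
      (by grind [Fin.succAbove]) (by grind [Fin.succAbove])
  · rintro ⟨⟨hu, h⟩, htu⟩
    refine ⟨by simpa using hu, fun i j hi hj hjL ↦ ?_⟩
    obtain ⟨j, rfl⟩ := Fin.exists_succAbove_eq (show j ≠ t by grind)
    rcases Fin.eq_self_or_eq_succAbove t i with rfl | ⟨i, rfl⟩
    · simp
    · simpa using h i j (by grind [Fin.succAbove]) (by grind [Fin.succAbove])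
        (by grind [Fin.succAbove])

lemma card_sepSites_insertBottom (ht : t ≤ L) :
    #(sepSites L.succ (insertBottom t π)) = #{u ∈ sepSites L π | t ≤ u} + 1 :=
  card_eq_card_add_one_of_zero_mem zero_mem_sepSites fun u ↦ by
    rw [succ_mem_sepSites_insertBottom_iff ht, mem_filter]

variable {M : Type*} [AddCommMonoid M] (φ : ℕ → M)

variable (L π) in
lemma sum_ascSites_insertBottom :
    ∑ t ∈ ascSites L π, φ #(ascSites L.succ (insertBottom t π)) =
      ∑ m ∈ Ico 2 (#(ascSites L π) + 2), φ m := by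
  have hlt (t) (ht : t ∈ ascSites L π) := val_lt_card_ascSites ht
  rw [sum_congr rfl fun t ht ↦ by rw [card_ascSites_insertBottom ht]]
  refine sum_comp_eq_sum_of_injOn (fun t ht ↦ ?_) (fun t ht t' ht' h ↦ ?_) (by simp) φ
  · have := hlt t ht
    rw [coe_Ico, Set.mem_Ico]
    split_ifs with ht0 <;> grind
  · have := hlt t ht
    have := hlt t' ht'
    grind

variable (L π) in
lemma sum_sepSites_insertBottom :
    ∑ t ∈ sepSites L π, φ #(sepSites L.succ (insertBottom t π)) =
      ∑ m ∈ Ico 2 (#(sepSites L π) + 2), φ m := by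
  rw [← sum_card_filter_le_add_one]
  exact sum_congr rfl fun t ht ↦ by rw [card_sepSites_insertBottom (mem_sepSites.1 ht).1]

end SitesInsertBottom

section Ascent

variable {n : ℕ} {L t : Fin (n + 3)} {π : Perm (Fin (n + 2))}

lemma insertBottom_zero_lt_one_iff :
    insertBottom t π 0 < insertBottom t π 1 ↔ t = 0 ∨ 1 < t ∧ π 0 < π 1 := by
  rcases lt_trichotomy t 1 with ht | rfl | ht
  · obtain rfl := (Fin.lt_one_iff t).1 ht
    simpa using (insertBottom_zero_succ π 0).symm ▸ Fin.succ_pos (π 0)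
  · simp
  · have h0 : t.succAbove 0 = 0 := Fin.succAbove_ne_zero_zero (by grind)
    have h1 : t.succAbove 1 = 1 := by
      rw [Fin.succAbove_of_castSucc_lt _ _ (by simpa using ht)]; simp
    have := insertBottom_succAbove t π 0
    have := insertBottom_succAbove t π 1
    grind

lemma lt_of_mem_ascSites (ht : t ∈ ascSites L π) (h : 1 < t) : π 0 < π 1 :=
  (mem_ascSites.1 ht).2 0 1 (by simp) (by simpa using h)

lemma mem_ascSites_of_lt (h : π 0 < π 1) (ht : (t : ℕ) ≤ 2) (htL : t ≤ L) : t ∈ ascSites L π := by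
  refine mem_ascSites.2 ⟨htL, fun i j hij hj ↦ ?_⟩
  have hj : (j : ℕ) < t := hj
  obtain rfl : j = 1 := by rw [Fin.ext_iff, Fin.val_one]; omega
  obtain rfl : i = 0 := by grind
  exact h

lemma one_mem_ascSites (hL : 1 < L) : 1 ∈ ascSites L π := by
  exact mem_ascSites.2 ⟨hL.le, fun i j hij hj ↦ by
    have hj : (j : ℕ) < 1 := hj
    omega⟩

lemma card_ascSites_eq_two_iff (hL : 1 < L) : #(ascSites L π) = 2 ↔ ¬ π 0 < π 1 := by
  have h1 := val_lt_card_ascSites (one_mem_ascSites (π := π) hL)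
  constructor
  · intro h hlt
    have := val_lt_card_ascSites (mem_ascSites_of_lt (t := 2) hlt Fin.val_two.le hL)
    rw [Fin.val_two] at this
    omega
  · intro h
    have hsub : ascSites L π ⊆ Iic 1 := fun t ht ↦
      mem_Iic.2 (not_lt.1 fun h1 ↦ h (lt_of_mem_ascSites ht h1))
    have := card_le_card hsub
    rw [Fin.card_Iic, Fin.val_one] at this
    rw [Fin.val_one] at h1
    omega

lemma one_mem_sepSites_insertBottom_iff (ht : t ≤ L) :
    1 ∈ sepSites L.succ (insertBottom t π) ↔ t = 0 := by
  rw [← Fin.succ_zero_eq_one, succ_mem_sepSites_insertBottom_iff ht]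
  simp [zero_mem_sepSites]

lemma lt_of_one_mem_sepSites (hL : 1 < L) (h : 1 ∈ sepSites L π) : π 0 < π 1 :=
  (mem_sepSites.1 h).2 0 1 (by simp) (by simp) (by simpa using hL)

lemma two_le_card_sepSites (hL : 1 < L) : 2 ≤ #(sepSites L π) :=
  one_lt_card.2 ⟨0, zero_mem_sepSites, L, self_mem_sepSites, by grind⟩

lemma three_le_card_sepSites (hL : 1 < L) (h : 1 ∈ sepSites L π) : 3 ≤ #(sepSites L π) :=
  two_lt_card.2 ⟨0, zero_mem_sepSites, 1, h, L, self_mem_sepSites, by simp, by grind, hL.ne⟩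

end Ascent

/-- The weight `φ s` of a permutation with `s` separating sites that begins with an ascent and does
not admit a dot between its first two dots. -/
def ascWeight {n : ℕ} {M : Type*} [AddCommMonoid M] (φ : ℕ → M) (L : Fin (n + 3))
    (π : Perm (Fin (n + 2))) : M :=
  if 1 ∉ sepSites L π ∧ π 0 < π 1 then φ #(sepSites L π) else 0

/-- The weight `φ 2 + ⋯ + φ (s - 1)` of a permutation with `s` separating sites that begins with a
descent. -/
def descWeight {n : ℕ} {M : Type*} [AddCommMonoid M] (φ : ℕ → M) (L : Fin (n + 3))
    (π : Perm (Fin (n + 2))) : M :=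
  if π 0 < π 1 then 0 else ∑ m ∈ Ico 2 #(sepSites L π), φ m

section Weights

variable {M : Type*} [AddCommMonoid M]

lemma card_filter_lt_add {α : Type*} [LinearOrder α] (s : Finset α) (a : α) :
    #{u ∈ s | a < u} + (if a ∈ s then 1 else 0) = #{u ∈ s | a ≤ u} := by
  have hsplit : {u ∈ s | a ≤ u} = {u ∈ s | a < u} ∪ {u ∈ s | a = u} := by
    simp only [← filter_or, le_iff_lt_or_eq]
  rw [hsplit, card_union_of_disjoint (disjoint_filter.2 fun u _ h ↦ h.ne), filter_eq]
  split_ifs <;> simp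

lemma sum_Ico_two_sum_Ico_two (φ : ℕ → M) (k : ℕ) :
    ∑ s ∈ Ico 2 (k + 2), ∑ m ∈ Ico 2 s, φ m =
      ∑ s ∈ Ico 2 (k + 1), ∑ m ∈ Ico 2 (s + 1), φ m := by
  rw [sum_Ico_add' (fun s ↦ ∑ m ∈ Ico 2 s, φ m)]
  cases k with
  | zero => rfl
  | succ k => rw [sum_eq_sum_Ico_succ_bot (by omega), Ico_self, sum_empty, zero_add]

variable {n : ℕ} {L : Fin (n + 3)} {π : Perm (Fin (n + 2))}

lemma card_filter_pos_sepSites : #{u ∈ sepSites L π | 0 < u} + 1 = #(sepSites L π) := by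
  simpa only [zero_mem_sepSites, if_true, Fin.zero_le, filter_true] using
    card_filter_lt_add (sepSites L π) 0

lemma card_filter_one_le_sepSites : #{u ∈ sepSites L π | 1 ≤ u} + 1 = #(sepSites L π) :=
  card_filter_pos_sepSites

lemma sum_sepSites_filter_insertBottom (P : Fin (n + 3) → Prop) [DecidablePred P]
    (hP : ∀ t u, t ≤ u → P t → P u) (φ : ℕ → M) :
    ∑ t ∈ sepSites L π with P t, φ #(sepSites L.succ (insertBottom t π)) =
      ∑ m ∈ Ico 2 (#{t ∈ sepSites L π | P t} + 2), φ m := by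
  rw [← sum_card_filter_le_add_one]
  refine sum_congr rfl fun t ht ↦ ?_
  obtain ⟨htS, hPt⟩ := mem_filter.1 ht
  rw [card_sepSites_insertBottom (mem_sepSites.1 htS).1, filter_filter]
  congr 3
  grind

lemma sum_ascWeight_insertBottom (hL : 1 < L) (φ : ℕ → M) :
    ∑ t ∈ sepSites L π, ascWeight φ L.succ (insertBottom t π) =
      (if 1 ∈ sepSites L π then ∑ m ∈ Ico 2 #(sepSites L π), φ m else 0) +
        ascWeight (fun s ↦ ∑ m ∈ Ico 2 (s + 1), φ m) L π := by
  have hchild (t) (ht : t ∈ sepSites L π) : ascWeight φ L.succ (insertBottom t π) =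
      if 1 < t ∧ π 0 < π 1 then φ #(sepSites L.succ (insertBottom t π)) else 0 := by
    simp only [ascWeight, one_mem_sepSites_insertBottom_iff (mem_sepSites.1 ht).1,
      insertBottom_zero_lt_one_iff]
    grind
  rw [sum_congr rfl hchild, ascWeight]
  by_cases hasc : π 0 < π 1
  · have hcard := card_filter_one_le_sepSites (L := L) (π := π)
    rw [← card_filter_lt_add] at hcard
    simp only [hasc, and_true, ← sum_filter]
    rw [sum_sepSites_filter_insertBottom (1 < ·) fun t u htu ht ↦ ht.trans_le htu]
    split_ifs at hcard ⊢ <;> simp [← hcard]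
  · have h1 : 1 ∉ sepSites L π := fun h ↦ hasc (lt_of_one_mem_sepSites hL h)
    simp [hasc, h1]

lemma sum_descWeight_insertBottom (hL : 1 < L) (φ : ℕ → M) :
    ∑ t ∈ sepSites L π, descWeight φ L.succ (insertBottom t π) =
      (if 1 ∈ sepSites L π then ∑ m ∈ Ico 2 #(sepSites L π), φ m else 0) +
        descWeight (fun s ↦ ∑ m ∈ Ico 2 (s + 1), φ m) L π := by
  simp only [descWeight, insertBottom_zero_lt_one_iff]
  by_cases hasc : π 0 < π 1
  · have hchild (t) (ht : t ∈ sepSites L π) :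
        (if t = 0 ∨ 1 < t ∧ π 0 < π 1 then 0
          else ∑ m ∈ Ico 2 #(sepSites L.succ (insertBottom t π)), φ m) =
        if 1 = t then ∑ m ∈ Ico 2 #(sepSites L π), φ m else 0 := by
      rcases lt_trichotomy t 1 with h | rfl | h
      · simp [(Fin.lt_one_iff t).1 h]
      · simp [card_sepSites_insertBottom hL.le, card_filter_one_le_sepSites]
      · simp [h, h.ne, hasc]
    rw [sum_congr rfl hchild, sum_ite_eq, if_pos hasc, add_zero]
  · have h1 : 1 ∉ sepSites L π := fun h ↦ hasc (lt_of_one_mem_sepSites hL h)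
    have hchild (t) (_ : t ∈ sepSites L π) :
        (if t = 0 ∨ 1 < t ∧ π 0 < π 1 then 0
          else ∑ m ∈ Ico 2 #(sepSites L.succ (insertBottom t π)), φ m) =
        if 0 < t then ∑ m ∈ Ico 2 #(sepSites L.succ (insertBottom t π)), φ m else 0 := by
      simp [hasc, Fin.pos_iff_ne_zero]
    rw [sum_congr rfl hchild, ← sum_filter,
      sum_sepSites_filter_insertBottom (0 < ·) (fun t u htu ht ↦ ht.trans_le htu)
        (fun s ↦ ∑ m ∈ Ico 2 s, φ m), if_neg h1, if_neg hasc, zero_add,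
      sum_Ico_two_sum_Ico_two, card_filter_pos_sepSites]

end Weights

/-- The induction invariant: the numbers of sites of the `321`-avoiders and of the `312`-avoiders of
`b` have the same distribution, and for every `u ≥ 2` there are as many `312`-avoiders with exactly
`u` sites that begin with an ascent and do not admit a dot between their first two dots as there are
`312`-avoiders with more than `u` sites that begin with a descent. -/
structure SitesEquidistributed {n : ℕ} (b : Fin (n + 2) → ℕ) (L : Fin (n + 3)) : Prop where
  sum_card_sites (φ : ℕ → ℕ) :
    ∑ π ∈ avoiders b p321, φ #(ascSites L π) = ∑ π ∈ avoiders b p312, φ #(sepSites L π)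
  sum_weight (φ : ℕ → ℕ) :
    ∑ π ∈ avoiders b p312, ascWeight φ L π = ∑ π ∈ avoiders b p312, descWeight φ L π

namespace SitesEquidistributed

variable {n : ℕ}

lemma of_removeBottom {b : Fin (n + 3) → ℕ} (hb : Monotone b) {L : Fin (n + 3)} (hL : 1 < L)
    (hbL : b 0 = L + 1) (h : SitesEquidistributed (removeBottom b) L) :
    SitesEquidistributed b L.succ where
  sum_card_sites φ := by
    rw [sum_avoiders_321 hb hbL, sum_avoiders_312 hb hbL]
    simp only [sum_ascSites_insertBottom, sum_sepSites_insertBottom]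
    exact h.sum_card_sites fun s ↦ ∑ m ∈ Ico 2 (s + 2), φ m
  sum_weight φ := by
    rw [sum_avoiders_312 hb hbL, sum_avoiders_312 hb hbL]
    simp only [sum_ascWeight_insertBottom hL, sum_descWeight_insertBottom hL, sum_add_distrib,
      h.sum_weight]

variable {b : Fin (n + 2) → ℕ} {L : Fin (n + 3)}

lemma card_avoiders (h : SitesEquidistributed b L) :
    #(avoiders b p321) = #(avoiders b p312) := by
  simpa only [card_eq_sum_ones] using h.sum_card_sites fun _ ↦ 1

lemma card_avoiders_ascent (hL : 1 < L) (h : SitesEquidistributed b L) :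
    #{π ∈ avoiders b p321 | π 0 < π 1} = #{π ∈ avoiders b p312 | π 0 < π 1} := by
  have h321 (π : Perm (Fin (n + 2))) :
      (if π 0 < π 1 then 1 else 0) = if #(ascSites L π) = 2 then 0 else 1 := by
    simp only [card_ascSites_eq_two_iff hL, ite_not]
  have h312 (π : Perm (Fin (n + 2))) :
      (if π 0 < π 1 then 1 else 0) + descWeight (fun s ↦ if s = 2 then 1 else 0) L π =
        (if #(sepSites L π) = 2 then 0 else 1) +
          ascWeight (fun s ↦ if s = 2 then 1 else 0) L π := by
    have h2 := two_le_card_sepSites (π := π) hL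
    have h3 := three_le_card_sepSites (π := π) hL
    rw [ascWeight, descWeight]
    simp only [sum_ite_eq', mem_Ico]
    grind
  have hsum := sum_congr rfl fun π (_ : π ∈ avoiders b p312) ↦ h312 π
  rw [sum_add_distrib, sum_add_distrib, h.sum_weight, Nat.add_right_cancel_iff] at hsum
  rw [card_filter, card_filter, hsum, sum_congr rfl fun π _ ↦ h321 π]
  exact h.sum_card_sites fun s ↦ if s = 2 then 0 else 1

end SitesEquidistributed

section TwoColumns

variable {n : ℕ} {L : Fin (n + 3)}

lemma card_ascSites_of_val_eq_two (hL : (L : ℕ) = 2) (π : Perm (Fin (n + 2))) :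
    #(ascSites L π) = if π 0 < π 1 then 3 else 2 := by
  split_ifs with h
  · have hIic : ascSites L π = Iic L := by
      ext t
      rw [mem_Iic]
      exact ⟨fun ht ↦ (mem_ascSites.1 ht).1, fun ht ↦ mem_ascSites_of_lt h (by omega) ht⟩
    rw [hIic, Fin.card_Iic, hL]
  · exact (card_ascSites_eq_two_iff (by simp [Fin.lt_def, hL])).2 h

lemma one_mem_sepSites_iff_of_val_eq_two (hL : (L : ℕ) = 2) {π : Perm (Fin (n + 2))} :
    1 ∈ sepSites L π ↔ π 0 < π 1 := by
  have h1L : 1 < L := by simp [Fin.lt_def, hL]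
  refine ⟨lt_of_one_mem_sepSites h1L, fun h ↦ mem_sepSites.2 ⟨h1L.le, fun i j hi hj hjL ↦ ?_⟩⟩
  obtain rfl : i = 0 := by simpa using hi
  obtain rfl : j = 1 := by
    rw [Fin.ext_iff, Fin.val_one]
    have hj : 1 ≤ (j : ℕ) := by simpa [Fin.le_def] using hj
    have hjL : (j : ℕ) < L := hjL
    omega
  exact h

lemma card_sepSites_of_val_eq_two (hL : (L : ℕ) = 2) (π : Perm (Fin (n + 2))) :
    #(sepSites L π) = if π 0 < π 1 then 3 else 2 := by
  have h1L : 1 < L := by simp [Fin.lt_def, hL]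
  have hIic : sepSites L π ⊆ Iic L := fun t ht ↦ mem_Iic.2 (mem_sepSites.1 ht).1
  split_ifs with h <;> rw [← one_mem_sepSites_iff_of_val_eq_two hL] at h
  · refine le_antisymm ?_ (three_le_card_sepSites h1L h)
    simpa [hL] using card_le_card hIic
  · refine le_antisymm ?_ (two_le_card_sepSites h1L)
    simpa [hL, h1L.le] using card_le_card (subset_erase.2 ⟨hIic, h⟩)

lemma SitesEquidistributed.of_val_eq_two {b : Fin (n + 2) → ℕ} (hL : (L : ℕ) = 2)
    (hcard : #(avoiders b p321) = #(avoiders b p312))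
    (hasc : #{π ∈ avoiders b p321 | π 0 < π 1} = #{π ∈ avoiders b p312 | π 0 < π 1}) :
    SitesEquidistributed b L where
  sum_card_sites φ := by
    have hdesc : #{π ∈ avoiders b p321 | ¬ π 0 < π 1} = #{π ∈ avoiders b p312 | ¬ π 0 < π 1} := by
      have h321 := card_filter_add_card_filter_not (s := avoiders b p321) fun π ↦ π 0 < π 1
      have h312 := card_filter_add_card_filter_not (s := avoiders b p312) fun π ↦ π 0 < π 1
      omega
    simp only [card_ascSites_of_val_eq_two hL, card_sepSites_of_val_eq_two hL, apply_ite φ,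
      sum_ite, sum_const, hasc, hdesc]
  sum_weight φ := by
    refine sum_congr rfl fun π _ ↦ ?_
    rw [ascWeight, descWeight, card_sepSites_of_val_eq_two hL]
    simp only [one_mem_sepSites_iff_of_val_eq_two hL]
    split_ifs <;> simp_all

end TwoColumns

lemma not_containsIn_of_lt {n k : ℕ} (h : n < k) (b : Fin n → ℕ) (π : Perm (Fin n))
    (τ : Perm (Fin k)) : ¬ ContainsIn b π τ := by
  rintro ⟨f, hf, -⟩
  simpa [h.not_ge] using Fintype.card_le_of_injective f hf.injective

lemma avoiders_eq_of_lt {n k : ℕ} (h : n < k) (b : Fin n → ℕ) (σ τ : Perm (Fin k)) :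
    avoiders b σ = avoiders b τ := by
  ext π
  simp only [mem_avoiders, not_containsIn_of_lt h]

/-- The row lengths of a proper Young diagram all of whose critical points are `2`-critical. The
conventions are those of `IsTransversal`: the paper's height `y` is the index `y - 1`. -/
structure IsTwoCritical {n : ℕ} (b : Fin (n + 1) → ℕ) : Prop where
  monotone : Monotone b
  val_lt (y : Fin (n + 1)) : y < b y
  le (y : Fin (n + 1)) : b y ≤ n + 1
  critical (y : Fin n) : b y.castSucc < b y.succ → b y.castSucc = y + 3

namespace IsTwoCritical

lemma one_lt {n : ℕ} {b : Fin (n + 2) → ℕ} (hb : IsTwoCritical b) : 1 < b 0 := by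
  have h0 : 0 < b 0 := hb.val_lt 0
  have h1 : 1 < b 1 := hb.val_lt 1
  have h01 : b 0 < b 1 → b 0 = 3 := hb.critical 0
  omega

protected lemma removeBottom {n : ℕ} {b : Fin (n + 2) → ℕ} (hb : IsTwoCritical b) :
    IsTwoCritical (removeBottom b) where
  monotone _ _ h := Nat.sub_le_sub_right (hb.monotone (Fin.succ_le_succ_iff.2 h)) 1
  val_lt y := Nat.lt_sub_of_add_lt (hb.val_lt y.succ)
  le y := Nat.sub_le_of_le_add (hb.le y.succ)
  critical y h := by
    have := hb.critical y.succ (lt_of_tsub_lt_tsub_right h)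
    rw [removeBottom, Fin.succ_castSucc, this]
    simp

lemma sitesEquidistributed : ∀ {n : ℕ} {b : Fin (n + 2) → ℕ} (_ : IsTwoCritical b)
    {L : Fin (n + 3)} (_ : (L : ℕ) = b 0), SitesEquidistributed b L
  | 0, b, hb, L, hL => by
    have heq : avoiders b p321 = avoiders b p312 := avoiders_eq_of_lt (by omega) b _ _
    exact .of_val_eq_two (by grind [hb.one_lt]) (by rw [heq]) (by rw [heq])
  | n + 1, b, hb, L, hL => by
    obtain ⟨K, rfl⟩ := Fin.exists_succ_eq.2 (show L ≠ 0 by grind [hb.one_lt])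
    have hbK : b 0 = K + 1 := by simpa using hL.symm
    have hb' := hb.removeBottom
    obtain ⟨K', hK'⟩ : ∃ K' : Fin (n + 3), (K' : ℕ) = removeBottom b 0 :=
      ⟨⟨_, Nat.lt_succ_of_le (hb'.le 0)⟩, rfl⟩
    have ih := hb'.sitesEquidistributed hK'
    have h1K' : 1 < K' := by simpa [Fin.lt_def, hK'] using hb'.one_lt
    rcases (hb.monotone (Fin.zero_le 1)).eq_or_lt with heq | hlt
    · obtain rfl : K = K' := by
        rw [Fin.ext_iff, hK', removeBottom, Fin.succ_zero_eq_one, ← heq, hbK, Nat.add_sub_cancel]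
      exact .of_removeBottom hb.monotone h1K' hbK ih
    · have hK : (K : ℕ) = 2 := by simpa [hbK] using hb.critical 0 hlt
      exact .of_removeBottom hb.monotone (by simp [Fin.lt_def, hK]) hbK
        (.of_val_eq_two hK ih.card_avoiders (ih.card_avoiders_ascent h1K'))

end IsTwoCritical

section Cardinalities

lemma forall_val_eq_zero_val_eq_one_iff {n : ℕ} {P : Fin (n + 2) → Fin (n + 2) → Prop} :
    (∀ i j : Fin (n + 2), (i : ℕ) = 0 → (j : ℕ) = 1 → P i j) ↔ P 0 1 := by
  refine ⟨fun h ↦ h 0 1 rfl rfl, fun h i j hi hj ↦ ?_⟩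
  obtain rfl : i = 0 := Fin.ext hi
  obtain rfl : j = 1 := Fin.ext hj
  exact h

lemma SYcard_eq_card_avoiders {n k : ℕ} (b : Fin n → ℕ) (τ : Perm (Fin k)) :
    SYcard b τ = #(avoiders b τ) := by
  rw [SYcard, Nat.subtype_card _ fun _ ↦ mem_avoiders]

variable {n k : ℕ} (b : Fin (n + 2) → ℕ) (τ : Perm (Fin k))

lemma SYcardLeftAsc_eq_card_avoiders :
    SYcardLeftAsc b τ = #{π ∈ avoiders b τ | π 0 < π 1} := by
  refine Nat.subtype_card _ fun π ↦ ?_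
  rw [mem_filter, mem_avoiders, and_assoc, forall_val_eq_zero_val_eq_one_iff]

lemma SYcardLeftAsc_add_SYcardLeftDesc :
    SYcardLeftAsc b τ + SYcardLeftDesc b τ = SYcard b τ := by
  have hdesc : SYcardLeftDesc b τ = #{π ∈ avoiders b τ | ¬ π 0 < π 1} := by
    refine Nat.subtype_card _ fun π ↦ ?_
    have hne : π 1 ≠ π 0 := π.injective.ne (by simp)
    rw [mem_filter, mem_avoiders, and_assoc, forall_val_eq_zero_val_eq_one_iff, not_lt,
      hne.le_iff_lt]
  rw [SYcardLeftAsc_eq_card_avoiders, hdesc, SYcard_eq_card_avoiders,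
    card_filter_add_card_filter_not]

end Cardinalities

theorem stmt10 (n : ℕ) (hn : 2 ≤ n) (b : Fin n → ℕ) (hmono : Monotone b)
    (hb : ∀ y : Fin n, (y : ℕ) + 1 ≤ b y ∧ b y ≤ n)
    (hcrit : ∀ (j : ℕ) (h : j + 1 < n),
      b ⟨j, Nat.lt_of_succ_lt h⟩ < b ⟨j + 1, h⟩ → b ⟨j, Nat.lt_of_succ_lt h⟩ = j + 3) :
    SYcardLeftDesc b p321 = SYcardLeftDesc b p312 ∧
    SYcardLeftAsc b p321 = SYcardLeftAsc b p312 ∧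
    SYcard b p321 = SYcard b p312 := by
  obtain ⟨m, rfl⟩ := Nat.exists_eq_add_of_le' hn
  have hcritical : IsTwoCritical b :=
    ⟨hmono, fun y ↦ (hb y).1, fun y ↦ (hb y).2, fun y ↦ hcrit y y.succ.isLt⟩
  obtain ⟨L, hL⟩ : ∃ L : Fin (m + 3), (L : ℕ) = b 0 := ⟨⟨b 0, Nat.lt_succ_of_le (hb 0).2⟩, rfl⟩
  have h1L : 1 < L := by simpa [Fin.lt_def, hL] using hcritical.one_lt
  have hsites := hcritical.sitesEquidistributed hL
  have hcard : SYcard b p321 = SYcard b p312 := by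
    simpa only [SYcard_eq_card_avoiders] using hsites.card_avoiders
  have hasc : SYcardLeftAsc b p321 = SYcardLeftAsc b p312 := by
    simpa only [SYcardLeftAsc_eq_card_avoiders] using hsites.card_avoiders_ascent h1L
  have h321 := SYcardLeftAsc_add_SYcardLeftDesc b p321
  have h312 := SYcardLeftAsc_add_SYcardLeftDesc b p312
  exact ⟨by omega, hasc, hcard⟩
end

section
/- If every critical point of a Young diagram Y has index at most 2, i.e. for all 1 ≤ y ≤ n−1, b(y+1) > b(y) implies b(y) − y ≤ 2, then |S_Y(312)| = |S_Y(321)|. -/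
/-!
Group the transversals of `Y` by their running maxima, that is, by the positions and values of
their left-to-right maxima.  In each class exactly one transversal avoids `321` in `Y`, the
lexicographically smallest one, and exactly one avoids `312` in `Y`, the lexicographically greatest
one.  Both numbers in question therefore count the classes.

Exchanging the dots of `1` and `2` in an occurrence of `321` stays in the class and decreases the
transversal; in an occurrence of `312` it increases it.  So avoiders arise at the extremes, whatever
the critical points are.

Conversely, let `π < ρ` be in one class, and let `i` be the first column where they differ.  Since
`π i < ρ i`, some earlier column `j` carries a common dot higher than `ρ i`.  The value `π i`
appears in `ρ` to the right of `i`, so `ρ` contains `321`.  To find a `312` in `π`, try the columns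
`j`, `i` and `π⁻¹ (ρ i)`.  They work unless the row of `Y` at height `π i`, of length `B` say, stops
before the last of them; then some critical point at height `y ≥ π i` has row length `B ≤ y + 2`.
Both transversals have exactly `B - y ≤ 2` dots of height `> y` in the first `B` columns.  For `ρ`
they are those in columns `j` and `i`, so `π` has one in column `j` and another one in some column
`x > i`.  Equality of the running maxima forces `π x < π j`, and `j`, `i`, `x` is a `312` of `π`
inside `Y`.
-/


open Equiv

/-! ### Extremal elements of fibres -/

lemma ncard_fiberwise_max {α β γ : Type*} [LinearOrder γ] {s : Set α} (hs : s.Finite)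
    (F : α → β) {φ : α → γ} (hφ : φ.Injective) :
    {a ∈ s | ∀ c ∈ s, F c = F a → φ c ≤ φ a}.ncard = (F '' s).ncard := by
  refine Set.BijOn.ncard_eq (f := F) ⟨fun a ha => ⟨a, ha.1, rfl⟩, ?_, ?_⟩
  · rintro a ⟨has, hamax⟩ c ⟨hcs, hcmax⟩ hac
    exact hφ ((hcmax a has hac).antisymm (hamax c hcs hac.symm))
  · rintro _ ⟨a, ha, rfl⟩
    obtain ⟨m, ⟨hms, hma⟩, hmax⟩ :=
      Set.exists_max_image {c ∈ s | F c = F a} φ (hs.subset (Set.sep_subset _ _)) ⟨a, ha, rfl⟩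
    exact ⟨m, ⟨hms, fun c hc hcm => hmax c ⟨hc, hcm.trans hma⟩⟩, hma⟩

/-! ### Running maxima -/

section RunningMaxima

variable {ι α : Type*} [LinearOrder ι] [LocallyFiniteOrderBot ι] [LinearOrder α]

lemma exists_le_partialSups_eq (f : ι → α) (i : ι) : ∃ k ≤ i, partialSups f i = f k := by
  obtain ⟨k, hk, hmax⟩ := Finset.exists_mem_eq_sup' (Finset.nonempty_Iic (a := i)) f
  exact ⟨k, Finset.mem_Iic.1 hk, hmax⟩

lemma partialSups_comp_swap_le {f : ι → α} {i j k : ι} (hij : i ≤ j) (hik : i ≤ k)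
    (hj : f j ≤ f i) (hk : f k ≤ f i) : partialSups (f ∘ Equiv.swap j k) ≤ partialSups f := by
  refine fun x => partialSups_le _ _ _ fun l hl => ?_
  rw [Function.comp_apply]
  rcases eq_or_ne l j with rfl | hlj
  · rw [Equiv.swap_apply_left]
    exact hk.trans (le_partialSups_of_le f (hij.trans hl))
  rcases eq_or_ne l k with rfl | hlk
  · rw [Equiv.swap_apply_right]
    exact hj.trans (le_partialSups_of_le f (hik.trans hl))
  rw [Equiv.swap_apply_of_ne_of_ne hlj hlk]
  exact le_partialSups_of_le f hl

lemma partialSups_comp_swap {f : ι → α} {i j k : ι} (hij : i < j) (hik : i < k)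
    (hj : f j ≤ f i) (hk : f k ≤ f i) : partialSups (f ∘ Equiv.swap j k) = partialSups f := by
  have hswap : (f ∘ Equiv.swap j k) ∘ Equiv.swap j k = f := by
    ext x
    simp
  have hi : Equiv.swap j k i = i := Equiv.swap_apply_of_ne_of_ne hij.ne hik.ne
  refine (partialSups_comp_swap_le hij.le hik.le hj hk).antisymm ?_
  conv_lhs => rw [← hswap]
  exact partialSups_comp_swap_le hij.le hik.le (by simpa [hi] using hk) (by simpa [hi] using hj)

/-- If `g i` exceeded all earlier values, it would be the running maximum at `i`.  As `f i < g i`,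
`f` would attain it before `i`, where `f` and `g` agree, against the injectivity of `g`. -/
lemma exists_lt_apply_gt_of_partialSups_eq {f g : ι → α} (hg : g.Injective)
    (hsup : partialSups f = partialSups g) {i : ι} (hagree : ∀ k < i, f k = g k)
    (hi : f i < g i) : ∃ j < i, g i < f j := by
  obtain ⟨k, hki, hk⟩ := exists_le_partialSups_eq f i
  have hgk : g i ≤ f k := by
    rw [← hk, hsup]
    exact le_partialSups g i
  have hlt : k < i := hki.lt_of_ne fun h => hi.not_ge (h ▸ hgk)
  refine ⟨k, hlt, hgk.lt_of_ne ?_⟩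
  rw [hagree k hlt]
  exact hg.ne hlt.ne'

end RunningMaxima

lemma lt_symm_apply_of_agree {ι α : Type*} [LinearOrder ι] {σ τ : ι ≃ α} {i : ι}
    (hagree : ∀ k < i, σ k = τ k) (hi : σ i ≠ τ i) : i < σ.symm (τ i) := by
  refine lt_of_le_of_ne (le_of_not_gt fun hlt => ?_) fun h => hi ((Equiv.eq_symm_apply σ).1 h)
  have hτ : τ i = τ (σ.symm (τ i)) := by simpa using hagree _ hlt
  exact hlt.ne (τ.injective hτ).symm

/-! ### Patterns inside a Young diagram -/

section Patterns

variable {n : ℕ} {b : Fin n → ℕ} {π ρ : Equiv.Perm (Fin n)}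

lemma containsIn_iff_exists_strictMono (hmono : Monotone b) {m : ℕ}
    {τ : Equiv.Perm (Fin (m + 1))} :
    ContainsIn b π τ ↔ ∃ f : Fin (m + 1) → Fin n, StrictMono f ∧ StrictMono (π ∘ f ∘ τ.symm) ∧
      (f (Fin.last m) : ℕ) + 1 ≤ b (π (f (τ.symm 0))) := by
  refine exists_congr fun f => and_congr_right fun hf => ⟨?_, ?_⟩
  · rintro ⟨horder, hbox⟩
    exact ⟨fun s t hst => (horder _ _).1 (by simpa using hst), hbox _ _⟩
  · rintro ⟨horder, hbox⟩
    refine ⟨fun s t => by simpa using (horder.lt_iff_lt (a := τ s) (b := τ t)).symm, fun s t => ?_⟩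
    have hcol : f s ≤ f (Fin.last m) := hf.monotone (Fin.le_last s)
    have hrow : π (f (τ.symm 0)) ≤ π (f t) := by
      simpa using horder.monotone (Fin.zero_le (τ t))
    exact (Nat.succ_le_succ hcol).trans (hbox.trans (hmono hrow))

lemma containsIn_p312_iff (hmono : Monotone b) :
    ContainsIn b π p312 ↔ ∃ i j k, i < j ∧ j < k ∧ π j < π k ∧ π k < π i ∧
      (k : ℕ) + 1 ≤ b (π j) := by
  rw [containsIn_iff_exists_strictMono hmono]
  constructor
  · rintro ⟨f, hf, horder, hbox⟩
    exact ⟨f 0, f 1, f 2, hf (by decide), hf (by decide),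
      horder (show (0 : Fin 3) < 1 by decide), horder (show (1 : Fin 3) < 2 by decide), hbox⟩
  · rintro ⟨i, j, k, hij, hjk, hπjk, hπki, hbox⟩
    refine ⟨![i, j, k], by simp [hij, hjk], ?_, hbox⟩
    simp [Fin.strictMono_iff_lt_succ, Fin.forall_fin_two, p312, hπjk, hπki]

/-- The box spanned by a `321` lies in the diagram because its last dot is also its lowest. -/
lemma containsIn_p321_iff (hmono : Monotone b) (hπ : IsTransversal b π) :
    ContainsIn b π p321 ↔ ∃ i j k, i < j ∧ j < k ∧ π k < π j ∧ π j < π i := by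
  rw [containsIn_iff_exists_strictMono hmono]
  constructor
  · rintro ⟨f, hf, horder, -⟩
    exact ⟨f 0, f 1, f 2, hf (by decide), hf (by decide),
      horder (show (0 : Fin 3) < 1 by decide), horder (show (1 : Fin 3) < 2 by decide)⟩
  · rintro ⟨i, j, k, hij, hjk, hπkj, hπji⟩
    refine ⟨![i, j, k], by simp [hij, hjk], ?_, hπ k⟩
    simp [Fin.strictMono_iff_lt_succ, Fin.forall_fin_two, p321, hπkj, hπji]

lemma IsTransversal.mul_swap (hπ : IsTransversal b π) {j k : Fin n}
    (hj : (j : ℕ) + 1 ≤ b (π k)) (hk : (k : ℕ) + 1 ≤ b (π j)) :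
    IsTransversal b (π * Equiv.swap j k) := by
  intro l
  rw [Equiv.Perm.mul_apply]
  rcases eq_or_ne l j with rfl | hlj
  · rwa [Equiv.swap_apply_left]
  rcases eq_or_ne l k with rfl | hlk
  · rwa [Equiv.swap_apply_right]
  rw [Equiv.swap_apply_of_ne_of_ne hlj hlk]
  exact hπ l

lemma exists_toLex_gt_of_containsIn_p312 (hmono : Monotone b) (hπ : IsTransversal b π)
    (hπ312 : ContainsIn b π p312) :
    ∃ ρ, IsTransversal b ρ ∧ partialSups ρ = partialSups π ∧ toLex ⇑π < toLex ⇑ρ := by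
  obtain ⟨i, j, k, hij, hjk, hπjk, hπki, hbox⟩ := (containsIn_p312_iff hmono).1 hπ312
  have hrow : b (π j) ≤ b (π k) := hmono hπjk.le
  refine ⟨π * Equiv.swap j k, hπ.mul_swap (by omega) hbox, ?_, j, fun l hl => ?_, ?_⟩
  · exact partialSups_comp_swap hij (hij.trans hjk) (hπjk.trans hπki).le hπki.le
  · simp [Equiv.swap_apply_of_ne_of_ne hl.ne (hl.trans hjk).ne]
  · simpa using hπjk

lemma exists_toLex_lt_of_containsIn_p321 (hmono : Monotone b) (hπ : IsTransversal b π)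
    (hπ321 : ContainsIn b π p321) :
    ∃ ρ, IsTransversal b ρ ∧ partialSups ρ = partialSups π ∧ toLex ⇑ρ < toLex ⇑π := by
  obtain ⟨i, j, k, hij, hjk, hπkj, hπji⟩ := (containsIn_p321_iff hmono hπ).1 hπ321
  have hbox : (k : ℕ) + 1 ≤ b (π k) := hπ k
  have hrow : b (π k) ≤ b (π j) := hmono hπkj.le
  refine ⟨π * Equiv.swap j k, hπ.mul_swap (by omega) (by omega), ?_, ?_⟩
  · exact partialSups_comp_swap hij (hij.trans hjk) hπji.le (hπkj.trans hπji).le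
  · exact Pi.lex_desc hjk.le hπkj

/-! ### Comparable transversals with the same running maxima -/

lemma containsIn_p321_of_toLex_lt (hmono : Monotone b) (hρ : IsTransversal b ρ)
    (hsup : partialSups π = partialSups ρ) (hlt : toLex ⇑π < toLex ⇑ρ) : ContainsIn b ρ p321 := by
  obtain ⟨i, hagree : ∀ k < i, π k = ρ k, hi : π i < ρ i⟩ := hlt
  obtain ⟨j, hji, hρπ⟩ := exists_lt_apply_gt_of_partialSups_eq ρ.injective hsup hagree hi
  refine (containsIn_p321_iff hmono hρ).2 ⟨j, i, ρ.symm (π i), hji, ?_, ?_, ?_⟩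
  · exact lt_symm_apply_of_agree (fun k hk => (hagree k hk).symm) hi.ne'
  · simpa using hi
  · rwa [← hagree j hji]

/-- The columns among the first `m` whose dot is higher than `y`.  They are counted at a critical
point of height `y`, with `m` the length of the row there. -/
def highColumns (π : Equiv.Perm (Fin n)) (m : ℕ) (y : Fin n) : Finset (Fin n) :=
  {x | (x : ℕ) < m ∧ y < π x}

lemma mem_highColumns {m : ℕ} {y x : Fin n} :
    x ∈ highColumns π m y ↔ (x : ℕ) < m ∧ y < π x := by
  simp [highColumns]

/-- The dots in the rows up to `y` all lie in the first `b y` columns. -/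
lemma card_highColumns_add (hmono : Monotone b) (hπ : IsTransversal b π) (y : Fin n) :
    (highColumns π (b y) y).card + (y + 1) = min n (b y) := by
  have hlow : ((Finset.univ.filter fun x : Fin n => (x : ℕ) < b y).filter
      fun x => ¬ y < π x).card = y + 1 := by
    rw [← Fin.card_Iic y]
    refine Finset.card_equiv π fun x => ?_
    simp only [Finset.mem_filter, Finset.mem_univ, true_and, not_lt, Finset.mem_Iic,
      and_iff_right_iff_imp]
    exact fun hx => (hπ x).trans (hmono hx)
  rw [highColumns, ← Finset.filter_filter, ← hlow, Finset.card_filter_add_card_filter_not,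
    Fin.card_filter_val_lt]

/-- Every critical point of the diagram has index at most `d`.  The critical point after the
zero-indexed row `j` has height `j + 1`, hence index `b j - (j + 1)`. -/
def CriticalIndexLE (b : Fin n → ℕ) (d : ℕ) : Prop :=
  ∀ (j : ℕ) (h : j + 1 < n),
    b ⟨j, Nat.lt_of_succ_lt h⟩ < b ⟨j + 1, h⟩ → b ⟨j, Nat.lt_of_succ_lt h⟩ ≤ j + 1 + d

/-- The critical point is the last row as long as the row at height `a`. -/
lemma CriticalIndexLE.exists_row_le {d : ℕ} (hcrit : CriticalIndexLE b d) (hmono : Monotone b)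
    {a c : Fin n} (hac : b a < b c) : ∃ y, a ≤ y ∧ b y = b a ∧ b y ≤ y + 1 + d := by
  obtain ⟨y, hy, hlast⟩ :=
    Set.exists_max_image {y | b y ≤ b a} id (Set.toFinite _) ⟨a, le_refl (b a)⟩
  have hay : a ≤ y := hlast a (le_refl (b a))
  have hyc : y < c := lt_of_not_ge fun hcy => ((hmono hcy).trans hy).not_gt hac
  have hyn : (y : ℕ) + 1 < n := lt_of_le_of_lt hyc c.isLt
  refine ⟨y, hay, hy.antisymm (hmono hay), hcrit y hyn (lt_of_not_ge fun hstep => ?_)⟩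
  have hle : (⟨y + 1, hyn⟩ : Fin n) ≤ y := hlast _ (hstep.trans hy)
  exact (Nat.lt_succ_self _).not_ge hle

/-- The high columns of `ρ` can only be `j` and `i`, and `i` is not high for `π`. -/
lemma exists_gt_mem_highColumns {m : ℕ} {i j y : Fin n} (hagree : ∀ k < i, π k = ρ k)
    (hsup : partialSups π = partialSups ρ)
    (hcard : (highColumns π m y).card = (highColumns ρ m y).card)
    (htwo : (highColumns ρ m y).card ≤ 2) (hji : j < i) (him : (i : ℕ) < m) (hπi : π i ≤ y)
    (hρi : y < ρ i) (hρij : ρ i < ρ j) : ∃ x ∈ highColumns π m y, i < x ∧ π x < π j := by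
  have hiρ : i ∈ highColumns ρ m y := mem_highColumns.2 ⟨him, hρi⟩
  have hjρ : j ∈ highColumns ρ m y := mem_highColumns.2 ⟨lt_trans hji him, hρi.trans hρij⟩
  have hpair : {j, i} = highColumns ρ m y :=
    Finset.eq_of_subset_of_card_le (by simp [Finset.insert_subset_iff, hiρ, hjρ])
      (htwo.trans_eq (Finset.card_pair hji.ne).symm)
  have hiπ : i ∉ highColumns π m y := fun h => hπi.not_gt (mem_highColumns.1 h).2
  obtain ⟨x, hxπ, hxρ⟩ : ∃ x ∈ highColumns π m y, x ∉ highColumns ρ m y := by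
    by_contra! hsub
    exact hiπ (Finset.eq_of_subset_of_card_le hsub hcard.ge ▸ hiρ)
  obtain ⟨hxm, hyx⟩ := mem_highColumns.1 hxπ
  have hix : i < x := by
    refine lt_of_le_of_ne (le_of_not_gt fun hxi => hxρ ?_) fun h => hiπ (h ▸ hxπ)
    exact mem_highColumns.2 ⟨hxm, hagree x hxi ▸ hyx⟩
  refine ⟨x, hxπ, hix, lt_of_le_of_ne ?_ (π.injective.ne (hji.trans hix).ne')⟩
  -- The running maximum at `x` is a value of `ρ` above `y`, hence `ρ j` or `ρ i`.
  obtain ⟨z, hzx, hz⟩ := exists_le_partialSups_eq ρ x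
  have hxz : π x ≤ ρ z := by
    rw [← hz, ← hsup]
    exact le_partialSups π x
  have hzρ : z ∈ highColumns ρ m y := mem_highColumns.2 ⟨lt_of_le_of_lt hzx hxm, hyx.trans_le hxz⟩
  rw [← hpair, Finset.mem_insert, Finset.mem_singleton] at hzρ
  rw [hagree j hji]
  rcases hzρ with rfl | rfl
  · exact hxz
  · exact hxz.trans hρij.le

lemma containsIn_p312_of_toLex_lt (hmono : Monotone b) (hcrit : CriticalIndexLE b 2)
    (hπ : IsTransversal b π) (hρ : IsTransversal b ρ) (hsup : partialSups π = partialSups ρ)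
    (hlt : toLex ⇑π < toLex ⇑ρ) : ContainsIn b π p312 := by
  obtain ⟨i, hagree : ∀ k < i, π k = ρ k, hi : π i < ρ i⟩ := hlt
  obtain ⟨j, hji, hρπ⟩ := exists_lt_apply_gt_of_partialSups_eq ρ.injective hsup hagree hi
  refine (containsIn_p312_iff hmono).2 ?_
  by_cases hbox : (π.symm (ρ i) : ℕ) + 1 ≤ b (π i)
  · refine ⟨j, i, π.symm (ρ i), hji, lt_symm_apply_of_agree hagree hi.ne, ?_, ?_, hbox⟩
    · simpa using hi
    · simpa using hρπ
  have hrow : b (π i) < b (ρ i) := by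
    have hcol := hπ (π.symm (ρ i))
    rw [Equiv.apply_symm_apply] at hcol
    omega
  obtain ⟨y, hiy, hby, hindex⟩ := hcrit.exists_row_le hmono hrow
  have hyi : y < ρ i := lt_of_not_ge fun h => (hmono h).not_gt (hby ▸ hrow)
  have hcardπ := card_highColumns_add hmono hπ y
  have hcardρ := card_highColumns_add hmono hρ y
  obtain ⟨x, hxhigh, hix, hxj⟩ := exists_gt_mem_highColumns (m := b y) hagree hsup (by omega)
    (by omega) hji (hby ▸ hπ i) hiy hyi (hagree j hji ▸ hρπ)
  obtain ⟨hxm, hyx⟩ := mem_highColumns.1 hxhigh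
  exact ⟨j, i, x, hji, hix, hiy.trans_lt hyx, hxj, hby ▸ hxm⟩

/-! ### Avoiders as extremal elements -/

lemma not_containsIn_p312_iff (hmono : Monotone b) (hcrit : CriticalIndexLE b 2)
    (hπ : IsTransversal b π) :
    ¬ ContainsIn b π p312 ↔
      ∀ ρ, IsTransversal b ρ → partialSups ρ = partialSups π → toLex ⇑ρ ≤ toLex ⇑π := by
  constructor
  · intro havoid ρ hρ hsup
    exact le_of_not_gt fun hlt =>
      havoid (containsIn_p312_of_toLex_lt hmono hcrit hπ hρ hsup.symm hlt)
  · intro hmax hcontains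
    obtain ⟨ρ, hρ, hsup, hlt⟩ := exists_toLex_gt_of_containsIn_p312 hmono hπ hcontains
    exact (hmax ρ hρ hsup).not_gt hlt

lemma not_containsIn_p321_iff (hmono : Monotone b) (hπ : IsTransversal b π) :
    ¬ ContainsIn b π p321 ↔
      ∀ ρ, IsTransversal b ρ → partialSups ρ = partialSups π → toLex ⇑π ≤ toLex ⇑ρ := by
  constructor
  · intro havoid ρ _ hsup
    exact le_of_not_gt fun hlt => havoid (containsIn_p321_of_toLex_lt hmono hπ hsup hlt)
  · intro hmin hcontains
    obtain ⟨ρ, hρ, hsup, hlt⟩ := exists_toLex_lt_of_containsIn_p321 hmono hπ hcontains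
    exact (hmin ρ hρ hsup).not_gt hlt

/-- The set of running-maximum sequences of the transversals of the diagram; its cardinality is the
common value of the two counts. -/
def runningMaxima (b : Fin n → ℕ) : Set (Fin n →o Fin n) :=
  (fun π : Equiv.Perm (Fin n) => partialSups π) '' {π | IsTransversal b π}

lemma SYcard_p312_eq_ncard_runningMaxima (hmono : Monotone b) (hcrit : CriticalIndexLE b 2) :
    SYcard b p312 = (runningMaxima b).ncard := by
  have hφ : Function.Injective fun π : Equiv.Perm (Fin n) => toLex ⇑π :=
    toLex.injective.comp DFunLike.coe_injective
  rw [runningMaxima, ← ncard_fiberwise_max (Set.toFinite _) _ hφ]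
  exact congrArg Set.ncard
    (Set.ext fun π => and_congr_right fun hπ => not_containsIn_p312_iff hmono hcrit hπ)

lemma SYcard_p321_eq_ncard_runningMaxima (hmono : Monotone b) :
    SYcard b p321 = (runningMaxima b).ncard := by
  have hφ : Function.Injective fun π : Equiv.Perm (Fin n) => OrderDual.toDual (toLex ⇑π) :=
    OrderDual.toDual.injective.comp (toLex.injective.comp DFunLike.coe_injective)
  rw [runningMaxima, ← ncard_fiberwise_max (Set.toFinite _) _ hφ]
  exact congrArg Set.ncard
    (Set.ext fun π => and_congr_right fun hπ => not_containsIn_p321_iff hmono hπ)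

end Patterns

theorem stmt11 (n : ℕ) (b : Fin n → ℕ) (hmono : Monotone b)
    (hb : ∀ y : Fin n, (y : ℕ) + 1 ≤ b y ∧ b y ≤ n)
    (hcrit : ∀ (j : ℕ) (h : j + 1 < n),
      b ⟨j, Nat.lt_of_succ_lt h⟩ < b ⟨j + 1, h⟩ → b ⟨j, Nat.lt_of_succ_lt h⟩ ≤ j + 3) :
    SYcard b p312 = SYcard b p321 :=
  (SYcard_p312_eq_ncard_runningMaxima hmono hcrit).trans
    (SYcard_p321_eq_ncard_runningMaxima hmono).symm
end
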